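/- arXiv:1401.7923 — 7 statements merged into one kernel-verified Lean document; each statement's English description precedes it below -/
import Mathlib

section
/- For any finite simple graph G and any z > 0, the fixed-point equation X = z·ℛ_G(X) has a unique solution Y(z) ∈ (0,∞)^{E⃗}, and the belief-propagation iterates defined by m⁰ = 0 and m^{t+1} = z·ℛ_G(m^t) converge coordinatewise to Y(z) as t → ∞. -/
/-!
The map `F = z ⬝ ℛ_G` is antitone on nonnegative messages, so starting from `0` the even iterates
increase to some `A`, the odd iterates decrease to some `B`, every nonnegative fixed point lies
between `A` and `B`, and `A = F B`, `B = F A`. Everything reduces to `A = B`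
(`eq_of_swapped`).

For this, write `D^X_u` for the total flow of `X` into `u`. The two equations say that, on every
edge `uv`, `B_{u→v} (1 + D^A_u) = z + A_{v→u} B_{u→v} = A_{v→u} (1 + D^B_v)`, so that
`t(u,v) = A_{v→u} B_{u→v} / (z + A_{v→u} B_{u→v})` equals both `A_{v→u} / (1 + D^A_u)` and
`B_{u→v} / (1 + D^B_v)`. Double counting `∑ t(u,v)` gives
`∑_u D^A_u / (1 + D^A_u) = ∑_v D^B_v / (1 + D^B_v)`. Since `A ≤ B` and `x ↦ x / (1 + x)` is strictly
increasing, `D^A = D^B`, and hence `A = B`.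
-/

open Finset Filter Topology

variable {V : Type*} [Fintype V] [DecidableEq V]

namespace SimpleGraph

variable (G : SimpleGraph V) [DecidableRel G.Adj]

/-- The type of directed edges of `G`. -/
abbrev DEdge : Type _ := {p : V × V // G.Adj p.1 p.2}

/-- Reversal of a directed edge. -/
def rev (e : G.DEdge) : G.DEdge := ⟨(e.1.2, e.1.1), e.2.symm⟩

/-- Sum of the messages `X (w → u)` over `w ∈ ∂u \ {v}`. -/
def exclSum {M : Type*} [AddCommMonoid M] (X : G.DEdge → M) (u v : V) : M :=
  ∑ w ∈ ((G.neighborFinset u).erase v).attach,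
    X ⟨(w.1, u), ((mem_neighborFinset _ _ _).mp (Finset.mem_of_mem_erase w.2)).symm⟩

/-- The BP map `ℛ_G`: `(ℛ_G X)_{u→v} = 1 / (1 + ∑_{w ∈ ∂u∖v} X_{w→u})`. -/
noncomputable def bpR (X : G.DEdge → ℝ) (e : G.DEdge) : ℝ :=
  1 / (1 + G.exclSum X e.1.1 e.1.2)

/-- `Y` is a positive fixed point of `X = z ⬝ ℛ_G X`. -/
def IsBPFixed (z : ℝ) (Y : G.DEdge → ℝ) : Prop :=
  (∀ e, 0 < Y e) ∧ ∀ e, Y e = z * G.bpR Y e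

/-- Sum of messages pointing into `v`. -/
def inFlow {M : Type*} [AddCommMonoid M] (X : G.DEdge → M) (v : V) : M :=
  ∑ u ∈ (G.neighborFinset v).attach,
    X ⟨(u.1, v), ((mem_neighborFinset _ _ _).mp u.2).symm⟩

/-- Sum of messages pointing out of `v`. -/
def outFlow {M : Type*} [AddCommMonoid M] (X : G.DEdge → M) (v : V) : M :=
  ∑ u ∈ (G.neighborFinset v).attach,
    X ⟨(v, u.1), (mem_neighborFinset _ _ _).mp u.2⟩

/-- The map `𝒫_G` on `{0,1}`-valued messages. -/
def bpP (I : G.DEdge → ℕ) (e : G.DEdge) : ℕ :=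
  if G.exclSum I e.1.1 e.1.2 = 0 then 1 else 0

/-- `F_v(I) = min(1, Σ_{u ∈ ∂v} I_{u→v}) + max(0, 1 − Σ_{u ∈ ∂v} I_{v→u})`. -/
def Fv (I : G.DEdge → ℕ) (v : V) : ℕ :=
  min 1 (G.inFlow I v) + (1 - G.outFlow I v)

/-- The value `x_e(z)` built from the messages. -/
noncomputable def xval (Y : G.DEdge → ℝ) (z : ℝ) (e : G.DEdge) : ℝ :=
  Y e * Y (G.rev e) / (z + Y e * Y (G.rev e))

/-- Weight (number of present edges) of a `{0,1}`-vector on edges. -/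
def mWeight (B : G.edgeSet → Bool) : ℕ := ∑ e : G.edgeSet, if B e then 1 else 0

/-- `B` is (the indicator vector of) a matching. -/
def IsMatchingVec (B : G.edgeSet → Bool) : Prop :=
  ∀ v : V, (∑ e : G.edgeSet, if B e ∧ v ∈ (e : Sym2 V) then 1 else 0) ≤ 1

instance (B : G.edgeSet → Bool) : Decidable (G.IsMatchingVec B) := by
  unfold IsMatchingVec; infer_instance

/-- Partition function of the monomer-dimer model. -/
noncomputable def gibbsP (z : ℝ) : ℝ :=
  ∑ B : G.edgeSet → Bool, if G.IsMatchingVec B then z ^ G.mWeight B else 0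

/-- Edges incident to `v`. -/
def incE (v : V) : Finset G.edgeSet :=
  Finset.univ.filter (fun e => v ∈ (e : Sym2 V))

end SimpleGraph


namespace SimpleGraph
variable (G : SimpleGraph V) [DecidableRel G.Adj]

/-- The LABP iterates: `m⁰ = 0`, `m^{t+1} = z ⬝ ℛ_G (m^t)`. -/
noncomputable def bpIter (z : ℝ) : ℕ → G.DEdge → ℝ
  | 0 => 0
  | t + 1 => fun e => z * G.bpR (bpIter z t) e

end SimpleGraph


namespace SimpleGraph

/-! ### Double counting -/

/-- The double-counting argument, for arrays `a`, `b` on `ι × ι` where each ordered pair `(u, v)` is either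
a non-edge, with vanishing entries, or an edge carrying the fixed-point equations.
Summing `a v u * b u v / (z + a v u * b u v)` by rows and by columns compares the column sums of
`a` and `b`. -/
lemma array_eq_of_swapped {ι : Type*} [Fintype ι] {z : ℝ} (hz : 0 < z) (a b : ι → ι → ℝ)
    (ha : ∀ u v, 0 ≤ a u v) (hab : ∀ u v, a u v ≤ b u v)
    (h : ∀ u v, (a v u = 0 ∧ b u v = 0) ∨
      (b u v * (1 + ∑ w, a w u) = z + a v u * b u v ∧
        a v u * (1 + ∑ w, b w v) = z + a v u * b u v)) :
    ∀ u v, a u v = b u v := by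
  have hb : ∀ u v, 0 ≤ b u v := fun u v => (ha u v).trans (hab u v)
  have hDa : ∀ u, 0 ≤ ∑ w, a w u := fun u => Finset.sum_nonneg fun w _ => ha w u
  have hDb : ∀ u, 0 ≤ ∑ w, b w u := fun u => Finset.sum_nonneg fun w _ => hb w u
  have hD : ∀ u, ∑ w, a w u ≤ ∑ w, b w u := fun u => Finset.sum_le_sum fun w _ => hab w u
  have key : ∀ u v, a v u / (1 + ∑ w, a w u) = b u v / (1 + ∑ w, b w v) := by
    intro u v
    have h1 := hDa u
    have h2 := hDb v
    rcases h u v with ⟨h3, h4⟩ | ⟨h3, h4⟩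
    · simp [h3, h4]
    · have hpos : 0 < z + a v u * b u v := add_pos_of_pos_of_nonneg hz (mul_nonneg (ha _ _) (hb _ _))
      have e1 : a v u / (1 + ∑ w, a w u) = a v u * b u v / (z + a v u * b u v) := by
        rw [div_eq_div_iff (by positivity) hpos.ne', ← h3]; ring
      have e2 : b u v / (1 + ∑ w, b w v) = a v u * b u v / (z + a v u * b u v) := by
        rw [div_eq_div_iff (by positivity) hpos.ne', ← h4]; ring
      rw [e1, e2]
  have hsum : ∑ u, (∑ w, a w u) / (1 + ∑ w, a w u) = ∑ u, (∑ w, b w u) / (1 + ∑ w, b w u) := by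
    simp_rw [Finset.sum_div]
    conv_rhs => rw [Finset.sum_comm]
    exact Finset.sum_congr rfl fun u _ => Finset.sum_congr rfl fun v _ => key u v
  have hle : ∀ u ∈ (Finset.univ : Finset ι),
      (∑ w, a w u) / (1 + ∑ w, a w u) ≤ (∑ w, b w u) / (1 + ∑ w, b w u) := by
    intro u _
    have h1 := hDa u
    have h2 := hDb u
    rw [div_le_div_iff₀ (by positivity) (by positivity)]
    linarith [hD u]
  have heq := (Finset.sum_eq_sum_iff_of_le hle).1 hsum
  intro u v
  have hv : ∑ w, a w v = ∑ w, b w v := by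
    have h1 := hDa v
    have h2 := hDb v
    -- Equal values of the injective map `x ↦ x / (1 + x)` on `[0, ∞)`.
    have h3 := heq v (Finset.mem_univ v)
    rw [div_eq_div_iff (by positivity) (by positivity)] at h3
    linarith
  exact (Finset.sum_eq_sum_iff_of_le fun w _ => hab w v).1 hv u (Finset.mem_univ u)

variable (G : SimpleGraph V) [DecidableRel G.Adj]

/-! ### The update map -/

/-- Extension by `0` of a function on directed edges to all of `V × V`. -/
def extend (X : G.DEdge → ℝ) (u v : V) : ℝ :=
  if h : G.Adj u v then X ⟨(u, v), h⟩ else 0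

/-- On an edge `uv`, the subtracted term is `X_{v→u}`; off the edges it is `0`. -/
lemma exclSum_eq (X : G.DEdge → ℝ) (u v : V) :
    G.exclSum X u v = (∑ w, G.extend X w u) - G.extend X v u := by
  have h1 : G.exclSum X u v = ∑ w ∈ (G.neighborFinset u).erase v, G.extend X w u := by
    rw [exclSum, ← Finset.sum_attach ((G.neighborFinset u).erase v)]
    refine Finset.sum_congr rfl fun w _ => ?_
    have hw : G.Adj w.1 u :=
      ((mem_neighborFinset _ _ _).mp (Finset.mem_of_mem_erase w.2)).symm
    simp [extend, hw]
  have h2 : ∑ w ∈ (G.neighborFinset u).erase v, G.extend X w u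
      = ∑ w ∈ Finset.univ.erase v, G.extend X w u := by
    refine Finset.sum_subset (Finset.erase_subset_erase _ (Finset.subset_univ _)) ?_
    intro w hw hw'
    have : ¬ G.Adj w u := fun h => hw' (by
      simp only [Finset.mem_erase, mem_neighborFinset]
      exact ⟨Finset.ne_of_mem_erase hw, h.symm⟩)
    simp [extend, this]
  rw [h1, h2, eq_sub_iff_add_eq, Finset.sum_erase_add _ _ (Finset.mem_univ v)]

lemma exclSum_nonneg {X : G.DEdge → ℝ} (hX : 0 ≤ X) (u v : V) : 0 ≤ G.exclSum X u v :=
  Finset.sum_nonneg fun _ _ => hX _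

lemma exclSum_mono {X Y : G.DEdge → ℝ} (h : X ≤ Y) (u v : V) :
    G.exclSum X u v ≤ G.exclSum Y u v :=
  Finset.sum_le_sum fun _ _ => h _

/-- The belief-propagation update `z ⬝ ℛ_G`. -/
noncomputable def bpF (z : ℝ) (X : G.DEdge → ℝ) : G.DEdge → ℝ := fun e => z * G.bpR X e

variable {z : ℝ}

lemma bpF_pos (hz : 0 < z) {X : G.DEdge → ℝ} (hX : 0 ≤ X) (e : G.DEdge) : 0 < G.bpF z X e := by
  have := G.exclSum_nonneg hX e.1.1 e.1.2
  unfold bpF bpR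
  positivity

lemma bpF_nonneg (hz : 0 < z) {X : G.DEdge → ℝ} (hX : 0 ≤ X) : 0 ≤ G.bpF z X :=
  fun e => (G.bpF_pos hz hX e).le

lemma bpF_anti (hz : 0 < z) {X Y : G.DEdge → ℝ} (hX : 0 ≤ X) (h : X ≤ Y) :
    G.bpF z Y ≤ G.bpF z X := by
  intro e
  have h1 := G.exclSum_nonneg hX e.1.1 e.1.2
  have h2 := G.exclSum_mono h e.1.1 e.1.2
  unfold bpF bpR
  gcongr

lemma tendsto_bpF {f : ℕ → G.DEdge → ℝ} {X : G.DEdge → ℝ} (hX : 0 ≤ X)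
    (hf : Tendsto f atTop (𝓝 X)) : Tendsto (fun n => G.bpF z (f n)) atTop (𝓝 (G.bpF z X)) := by
  rw [tendsto_pi_nhds] at hf ⊢
  intro e
  have h1 := G.exclSum_nonneg hX e.1.1 e.1.2
  have hs : Tendsto (fun n => G.exclSum (f n) e.1.1 e.1.2) atTop
      (𝓝 (G.exclSum X e.1.1 e.1.2)) := tendsto_finsetSum _ fun _ _ => hf _
  exact (tendsto_const_nhds.div (tendsto_const_nhds.add hs) (by positivity)).const_mul z

/-- A comparable pair exchanged by `z ⬝ ℛ_G` is a single fixed point. -/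
lemma eq_of_swapped (hz : 0 < z) {A B : G.DEdge → ℝ} (hA0 : 0 ≤ A) (hAB : A ≤ B)
    (hA : G.bpF z B = A) (hB : G.bpF z A = B) : A = B := by
  have edge : ∀ (X Y : G.DEdge → ℝ), 0 ≤ X → G.bpF z X = Y → ∀ u v, G.Adj u v →
      G.extend Y u v * (1 + ∑ w, G.extend X w u) = z + G.extend X v u * G.extend Y u v := by
    intro X Y hX hXY u v huv
    have h0 := G.exclSum_nonneg hX u v
    -- `Y = F X` at `u → v`, cleared of its denominator.
    have h1 : G.extend Y u v = z * (1 / (1 + G.exclSum X u v)) := by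
      rw [← hXY]; simp [extend, huv, bpF, bpR]
    have h2 : G.extend Y u v * (1 + G.exclSum X u v) = z := by
      rw [h1]; field_simp
    rw [exclSum_eq] at h2
    linarith
  have hmain := array_eq_of_swapped hz (G.extend A) (G.extend B)
    (fun u v => by
      unfold extend; split_ifs with h
      exacts [hA0 _, le_rfl])
    (fun u v => by
      unfold extend; split_ifs with h
      exacts [hAB _, le_rfl])
    (fun u v => by
      by_cases huv : G.Adj u v
      · right
        refine ⟨edge A B hA0 hB u v huv, ?_⟩
        rw [edge B A (hA0.trans hAB) hA v u huv.symm, mul_comm]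
      · left
        have hvu : ¬ G.Adj v u := fun h => huv h.symm
        simp [extend, huv, hvu])
  funext e
  obtain ⟨⟨u, v⟩, huv⟩ := e
  simpa [extend, show G.Adj u v from huv] using hmain u v

/-! ### Even and odd iterates -/

lemma bpIter_nonneg (hz : 0 < z) (t : ℕ) : 0 ≤ G.bpIter z t := by
  induction t with
  | zero => exact le_rfl
  | succ t ih => exact G.bpF_nonneg hz ih

lemma bpIter_even_le_succ (hz : 0 < z) (n : ℕ) :
    G.bpIter z (2 * n) ≤ G.bpIter z (2 * (n + 1)) := by
  induction n with
  | zero => exact G.bpIter_nonneg hz _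
  | succ n ih =>
    exact G.bpF_anti hz (G.bpIter_nonneg hz _) (G.bpF_anti hz (G.bpIter_nonneg hz _) ih)

lemma bpIter_odd_succ_le (hz : 0 < z) (n : ℕ) :
    G.bpIter z (2 * (n + 1) + 1) ≤ G.bpIter z (2 * n + 1) :=
  G.bpF_anti hz (G.bpIter_nonneg hz _) (G.bpIter_even_le_succ hz n)

lemma bpIter_even_le_odd (hz : 0 < z) (n : ℕ) :
    G.bpIter z (2 * n) ≤ G.bpIter z (2 * n + 1) := by
  induction n with
  | zero => exact G.bpIter_nonneg hz _
  | succ n ih =>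
    exact G.bpF_anti hz (G.bpIter_nonneg hz _) (G.bpF_anti hz (G.bpIter_nonneg hz _) ih)

/-- A nonnegative fixed point separates the even iterates from the odd ones. -/
lemma bpIter_sandwich (hz : 0 < z) {Y : G.DEdge → ℝ} (hY0 : 0 ≤ Y) (hY : G.bpF z Y = Y) (n : ℕ) :
    G.bpIter z (2 * n) ≤ Y ∧ Y ≤ G.bpIter z (2 * n + 1) := by
  have step : ∀ t, G.bpIter z t ≤ Y → Y ≤ G.bpIter z (t + 1) := fun t h =>
    hY.symm.le.trans (G.bpF_anti hz (G.bpIter_nonneg hz t) h)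
  have step' : ∀ t, Y ≤ G.bpIter z t → G.bpIter z (t + 1) ≤ Y := fun t h =>
    (G.bpF_anti hz hY0 h).trans hY.le
  induction n with
  | zero => exact ⟨hY0, step 0 hY0⟩
  | succ n ih => exact ⟨step' _ ih.2, step _ (step' _ ih.2)⟩

/-- The even and the odd iterates converge to a common fixed point. -/
lemma exists_bpIter_limit (hz : 0 < z) : ∃ A : G.DEdge → ℝ, 0 ≤ A ∧ G.bpF z A = A ∧
    Tendsto (fun n => G.bpIter z (2 * n)) atTop (𝓝 A) ∧
    Tendsto (fun n => G.bpIter z (2 * n + 1)) atTop (𝓝 A) := by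
  have hmono : Monotone fun n => G.bpIter z (2 * n) :=
    monotone_nat_of_le_succ (G.bpIter_even_le_succ hz)
  have hanti : Antitone fun n => G.bpIter z (2 * n + 1) :=
    antitone_nat_of_succ_le (G.bpIter_odd_succ_le hz)
  have hE : Tendsto (fun n => G.bpIter z (2 * n)) atTop
      (𝓝 (fun e => ⨆ n, G.bpIter z (2 * n) e)) := by
    rw [tendsto_pi_nhds]
    refine fun e => tendsto_atTop_ciSup (fun m n h => hmono h e) ⟨G.bpIter z 1 e, ?_⟩
    rintro _ ⟨n, rfl⟩
    exact (G.bpIter_even_le_odd hz n e).trans (hanti (Nat.zero_le n) e)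
  have hO : Tendsto (fun n => G.bpIter z (2 * n + 1)) atTop
      (𝓝 (fun e => ⨅ n, G.bpIter z (2 * n + 1) e)) := by
    rw [tendsto_pi_nhds]
    refine fun e => tendsto_atTop_ciInf (fun m n h => hanti h e) ⟨0, ?_⟩
    rintro _ ⟨n, rfl⟩
    exact G.bpIter_nonneg hz _ e
  generalize (fun e => ⨆ n, G.bpIter z (2 * n) e) = A at hE
  generalize (fun e => ⨅ n, G.bpIter z (2 * n + 1) e) = B at hO
  have hA0 : 0 ≤ A := ge_of_tendsto' hE fun n => G.bpIter_nonneg hz _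
  have hAB : A ≤ B := le_of_tendsto_of_tendsto' hE hO (G.bpIter_even_le_odd hz)
  have hB : G.bpF z A = B := tendsto_nhds_unique (G.tendsto_bpF hA0 hE) hO
  have hA : G.bpF z B = A :=
    tendsto_nhds_unique (G.tendsto_bpF (hA0.trans hAB) hO) ((tendsto_add_atTop_iff_nat 1).2 hE)
  obtain rfl := G.eq_of_swapped hz hA0 hAB hA hB
  exact ⟨A, hA0, hA, hE, hO⟩

end SimpleGraph

/-- For any finite simple graph `G` and `z > 0`, the fixed point equation `X = z ⬝ ℛ_G X`
has a unique solution `Y(z) ∈ (0,∞)^{E⃗}`, and the BP iterates converge to it. -/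
theorem labp_convergence (G : SimpleGraph V) [DecidableRel G.Adj] (z : ℝ) (hz : 0 < z) :
    (∃! Y : G.DEdge → ℝ, (∀ e, 0 < Y e) ∧ ∀ e, Y e = z * G.bpR Y e) ∧
    ∀ Y : G.DEdge → ℝ, ((∀ e, 0 < Y e) ∧ ∀ e, Y e = z * G.bpR Y e) →
      ∀ e, Filter.Tendsto (fun t => G.bpIter z t e) Filter.atTop (nhds (Y e)) := by
  obtain ⟨A, hA0, hA, hE, hO⟩ := G.exists_bpIter_limit hz
  have huniq : ∀ Y : G.DEdge → ℝ, ((∀ e, 0 < Y e) ∧ ∀ e, Y e = z * G.bpR Y e) → Y = A := by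
    rintro Y ⟨hY0, hY⟩
    have hs := G.bpIter_sandwich hz (fun e => (hY0 e).le) (funext fun e => (hY e).symm)
    exact le_antisymm (ge_of_tendsto' hO fun n => (hs n).2) (le_of_tendsto' hE fun n => (hs n).1)
  refine ⟨⟨A, ⟨fun e => ?_, fun e => (congrFun hA e).symm⟩, huniq⟩, fun Y hY e => ?_⟩
  · rw [← hA]
    exact G.bpF_pos hz hA0 e
  · rw [huniq Y hY]
    refine (tendsto_pi_nhds.1 ?_) e
    intro s hs
    -- The even and odd subsequences both enter `s`, and together they cover all of `ℕ`.
    obtain ⟨N, hN⟩ := eventually_atTop.1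
      ((hE.eventually_mem hs).and (hO.eventually_mem hs))
    refine mem_atTop_sets.2 ⟨2 * N, fun t ht => ?_⟩
    rcases Nat.even_or_odd' t with ⟨k, rfl | rfl⟩
    · exact (hN k (by omega)).1
    · exact (hN k (by omega)).2
end

section
/- For any finite simple graph G, if I ∈ {0,1}^{E⃗} satisfies I = 𝒫_G(𝒫_G(I)), then the vector (F_v(I)/2, v ∈ V) is a fractional vertex cover of G, i.e. F_u(I)/2 + F_v(I)/2 ≥ 1 for every edge uv ∈ E and F_v(I)/2 ∈ [0,1] for all v. -/
/-!
Write `J = 𝒫_G I`, so that `I = 𝒫_G J`. Since `F_v` is a sum of two indicators (some message enters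
`v`; no message leaves `v`), it is at most `2`, and the edge inequality reduces to: if `uv` is an
edge and `F_u = 0` then `F_v = 2`. If `F_u = 0`, no `I`-message enters `u` and `I_{u→x} = 1` for
some `x`; hence `J_{u→v} = 1`, and `J_{w→u} = 0` for all `w ≠ x`.

* No `I`-message leaves `v`: `I_{v→u} = 0` as it enters `u`, and for `y ≠ u` the message
  `J_{u→v} = 1` forces `I_{v→y} = 0`.
* Some `I`-message enters `v`: if `x = v` this is `I_{u→x}`; otherwise `J_{v→u} = 0`, which means
  that some `I_{w→v}` with `w ≠ u` is nonzero.
-/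

open Finset Filter Topology

variable {V : Type*} [Fintype V] [DecidableEq V]

namespace SimpleGraph

theorem exclSum_eq_zero_iff (G : SimpleGraph V) [DecidableRel G.Adj] (X : G.DEdge → ℕ) (u v : V) :
    G.exclSum X u v = 0 ↔ ∀ w (h : G.Adj w u), w ≠ v → X ⟨(w, u), h⟩ = 0 := by
  simp only [exclSum, Finset.sum_eq_zero_iff, Finset.mem_attach, true_imp_iff, Subtype.forall,
    Finset.mem_erase, mem_neighborFinset]
  exact ⟨fun H w h hw => H w ⟨hw, h.symm⟩, fun H w h => H w h.2.symm h.1⟩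

theorem inFlow_eq_zero_iff (G : SimpleGraph V) [DecidableRel G.Adj] (X : G.DEdge → ℕ) (v : V) :
    G.inFlow X v = 0 ↔ ∀ u (h : G.Adj u v), X ⟨(u, v), h⟩ = 0 := by
  simp only [inFlow, Finset.sum_eq_zero_iff, Finset.mem_attach, true_imp_iff, Subtype.forall,
    mem_neighborFinset]
  exact ⟨fun H u h => H u h.symm, fun H u h => H u h.symm⟩

theorem outFlow_eq_zero_iff (G : SimpleGraph V) [DecidableRel G.Adj] (X : G.DEdge → ℕ) (v : V) :
    G.outFlow X v = 0 ↔ ∀ u (h : G.Adj v u), X ⟨(v, u), h⟩ = 0 := by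
  simp only [outFlow, Finset.sum_eq_zero_iff, Finset.mem_attach, true_imp_iff, Subtype.forall,
    mem_neighborFinset]

theorem bpP_eq_zero_iff (G : SimpleGraph V) [DecidableRel G.Adj] (X : G.DEdge → ℕ) {u v : V}
    (h : G.Adj u v) :
    G.bpP X ⟨(u, v), h⟩ = 0 ↔ ∃ w, ∃ h' : G.Adj w u, w ≠ v ∧ X ⟨(w, u), h'⟩ ≠ 0 := by
  have key := G.exclSum_eq_zero_iff X u v
  simp only [bpP, ite_eq_right_iff, one_ne_zero, imp_false, key]
  push Not
  rfl

/-- The edge inequality in its extreme case: a neighbour of a vertex with `F = 0` has `F = 2`. -/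
theorem Fv_eq_two_of_adj (G : SimpleGraph V) [DecidableRel G.Adj] (I : G.DEdge → ℕ)
    (hfix : ∀ e, I e = G.bpP (G.bpP I) e) {u v : V} (huv : G.Adj u v) (hu : G.Fv I u = 0) :
    G.Fv I v = 2 := by
  have hin : G.inFlow I u = 0 := by unfold Fv at hu; omega
  have hout : G.outFlow I u ≠ 0 := by unfold Fv at hu; omega
  rw [inFlow_eq_zero_iff] at hin
  rw [Ne, outFlow_eq_zero_iff] at hout
  push Not at hout
  obtain ⟨x, hx, hIx⟩ := hout
  have hJuv : G.bpP I ⟨(u, v), huv⟩ ≠ 0 := by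
    rw [Ne, bpP_eq_zero_iff]
    rintro ⟨w, hw, -, hne⟩
    exact hne (hin w hw)
  have hvout : G.outFlow I v = 0 := by
    rw [outFlow_eq_zero_iff]
    intro y hy
    by_cases hyu : y = u
    · subst hyu; exact hin v hy
    · rw [hfix, bpP_eq_zero_iff]
      exact ⟨u, huv, Ne.symm hyu, hJuv⟩
  have hvin : G.inFlow I v ≠ 0 := by
    rw [Ne, inFlow_eq_zero_iff]
    intro H
    by_cases hxv : x = v
    · subst hxv; exact hIx (H u hx)
    · have hJvu : G.bpP I ⟨(v, u), huv.symm⟩ = 0 := by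
        by_contra hne
        refine hIx ?_
        rw [hfix, bpP_eq_zero_iff]
        exact ⟨v, huv.symm, Ne.symm hxv, hne⟩
      rw [bpP_eq_zero_iff] at hJvu
      obtain ⟨w, hw, -, hne⟩ := hJvu
      exact hne (H w hw)
  unfold Fv
  omega

end SimpleGraph

/-- If `I = 𝒫_G (𝒫_G I)` then `(F_v(I)/2)_v` is a fractional vertex cover. -/
theorem labp_half_cover (G : SimpleGraph V) [DecidableRel G.Adj]
    (I : G.DEdge → ℕ) (hI01 : ∀ e, I e ≤ 1) (hfix : ∀ e, I e = G.bpP (G.bpP I) e) :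
    (∀ u v, G.Adj u v → 1 ≤ (G.Fv I u : ℝ) / 2 + (G.Fv I v : ℝ) / 2) ∧
    ∀ v, (G.Fv I v : ℝ) / 2 ∈ Set.Icc (0 : ℝ) 1 := by
  refine ⟨fun u v huv => ?_, fun v => ?_⟩
  · have h : 2 ≤ G.Fv I u + G.Fv I v := by
      have h1 := G.Fv_eq_two_of_adj I hfix huv
      have h2 := G.Fv_eq_two_of_adj I hfix huv.symm
      omega
    have h' : (2 : ℝ) ≤ G.Fv I u + G.Fv I v := by exact_mod_cast h
    linarith
  · have h : G.Fv I v ≤ 2 := by unfold SimpleGraph.Fv; omega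
    have h' : (G.Fv I v : ℝ) ≤ 2 := by exact_mod_cast h
    exact ⟨by positivity, by linarith⟩
end

section
/- If G = (U ∪ W, E) is a finite bipartite graph and I ∈ {0,1}^{E⃗} satisfies I = 𝒫_G(𝒫_G(I)), then the set V(I) is a vertex cover of G. -/
/-!
Write `J = 𝒫_G I`, and let `uw` be an edge with `u ∈ U`, `w ∈ W`. If `u ∉ V(I)`, then every message
of `I` into `u` vanishes. Hence `J (u → w) = 1`. Moreover `(𝒫_G J) (w → u) = I (w → u) = 0`, so
`J (v → w) ≠ 0` for some neighbour `v ≠ u` of `w`. Thus `J` sends at least `2` into `w`, that is,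
`w ∈ V(I)`. This is `inFlow_pos_or_two_le_inFlow_bpP`; bipartiteness ensures that every edge has
one endpoint on each side.
-/

open Finset Filter Topology

variable {V : Type*} [Fintype V] [DecidableEq V]

namespace SimpleGraph
variable (G : SimpleGraph V) [DecidableRel G.Adj]

/-- The set `V(I)` for a bipartition `c` (`c v = true` for `v ∈ U`, `c v = false` for `v ∈ W`):
`u ∈ U` is in `V(I)` iff `Σ_{v ∈ ∂u} I_{v→u} ≥ 1`, and `w ∈ W` is in `V(I)` iff
`Σ_{v ∈ ∂w} (𝒫_G I)_{v→w} ≥ 2`. -/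
def coverSet (c : V → Bool) (I : G.DEdge → ℕ) : Finset V :=
  Finset.univ.filter (fun v => if c v then 1 ≤ G.inFlow I v else 2 ≤ G.inFlow (G.bpP I) v)

end SimpleGraph


namespace SimpleGraph

/-- The flow into `w` splits into the message from a chosen neighbour `u` and the messages from
all the other neighbours. -/
theorem inFlow_eq_add_exclSum (G : SimpleGraph V) [DecidableRel G.Adj]
    {M : Type*} [AddCommMonoid M] (X : G.DEdge → M) {u w : V} (h : G.Adj u w) :
    G.inFlow X w = X ⟨(u, w), h⟩ + G.exclSum X w u := by
  -- Extending the messages by zero to all pairs of vertices turns the sums over attached finsets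
  -- into sums over plain finsets.
  let f : V → M := fun v => if hv : G.Adj v w then X ⟨(v, w), hv⟩ else 0
  have hf : ∀ v (hv : G.Adj v w), X ⟨(v, w), hv⟩ = f v := fun v hv => by simp [f, hv]
  have h₁ : G.inFlow X w = ∑ v ∈ G.neighborFinset w, f v := by
    unfold inFlow
    rw [← Finset.sum_attach (G.neighborFinset w) f]
    exact Finset.sum_congr rfl fun v _ => hf _ _
  have h₂ : G.exclSum X w u = ∑ v ∈ (G.neighborFinset w).erase u, f v := by
    unfold exclSum
    rw [← Finset.sum_attach ((G.neighborFinset w).erase u) f]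
    exact Finset.sum_congr rfl fun v _ => hf _ _
  rw [h₁, h₂, hf u h]
  exact (Finset.add_sum_erase _ f ((mem_neighborFinset _ _ _).mpr h.symm)).symm

/-- The covering property of a single edge whose endpoint `u` lies in `U` and whose endpoint `w`
lies in `W`. -/
theorem inFlow_pos_or_two_le_inFlow_bpP (G : SimpleGraph V) [DecidableRel G.Adj]
    (I : G.DEdge → ℕ) (hfix : ∀ e, I e = G.bpP (G.bpP I) e) {u w : V} (h : G.Adj u w) :
    1 ≤ G.inFlow I u ∨ 2 ≤ G.inFlow (G.bpP I) w := by
  by_cases hu : 1 ≤ G.inFlow I u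
  · exact Or.inl hu
  right
  have hsplit := inFlow_eq_add_exclSum G I h.symm
  have hin : I ⟨(w, u), h.symm⟩ = 0 := by omega
  have hex : G.exclSum I u w = 0 := by omega
  have hout : G.bpP I ⟨(u, w), h⟩ = 1 := if_pos hex
  -- The vanishing message `w → u` equals `𝒫_G (𝒫_G I)` there, so another neighbour of `w` sends
  -- it a nonzero message under `𝒫_G I`.
  have hne : G.exclSum (G.bpP I) w u ≠ 0 := by
    intro h0
    have h1 : G.bpP (G.bpP I) ⟨(w, u), h.symm⟩ = 1 := if_pos h0
    rw [← hfix, hin] at h1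
    exact zero_ne_one h1
  rw [inFlow_eq_add_exclSum G (G.bpP I) h, hout]
  omega

end SimpleGraph

/-- On a finite bipartite graph, if `I = 𝒫_G (𝒫_G I)` then `V(I)` is a vertex cover. -/
theorem labp_bipartite_cover (G : SimpleGraph V) [DecidableRel G.Adj]
    (c : V → Bool) (hc : ∀ u v, G.Adj u v → c u ≠ c v)
    (I : G.DEdge → ℕ) (hI01 : ∀ e, I e ≤ 1) (hfix : ∀ e, I e = G.bpP (G.bpP I) e) :
    ∀ u v, G.Adj u v → u ∈ G.coverSet c I ∨ v ∈ G.coverSet c I := by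
  intro u v h
  have hne := hc u v h
  have huv := SimpleGraph.inFlow_pos_or_two_le_inFlow_bpP G I hfix h
  have hvu := SimpleGraph.inFlow_pos_or_two_le_inFlow_bpP G I hfix h.symm
  cases hu : c u <;> cases hv : c v <;> simp_all [SimpleGraph.coverSet]
  exact hvu.symm
end

section
/- Let G be a finite simple graph and let μ be a probability distribution on {0,1}^E supported on matchings of G. Define x ∈ ℝ^E by x_e = μ(B_e = 1). Then x ∈ FM(G); moreover the marginal of μ on the edges incident to any vertex v is given by μ_{∂v}(b) = (1 − Σ_{e ∋ v} x_e)^{1 − Σ_{e ∋ v} b_e} · Π_{e ∋ v} x_e^{b_e}, and the Bethe entropy of μ equals S^B[μ] = (1/2) Σ_{v∈V} { Σ_{e ∋ v} ( −x_e ln x_e + (1−x_e) ln(1−x_e) ) − 2(1 − Σ_{e ∋ v} x_e) ln(1 − Σ_{e ∋ v} x_e) }. -/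
/-!
At a vertex `v` a matching uses at most one incident edge, so the marginal of `μ` on `∂v` lives on
the zero vector and the unit vectors (`starVec`). The unit vector at `e` has mass `x e`, because in
a matching `B e = 1` already forces all other edges at `v` to be absent; total mass one then gives
the zero vector mass `1 - ∑ x e`, which is therefore nonnegative. This yields the polytope
inequality and the product formula. The vertex entropy becomes a sum of `t ↦ t * log t` over these
masses (`sum_eq_starVec`), and since each edge lies in exactly two stars (`sum_sum_incE`), the
edge terms of the Bethe entropy recombine into the claimed expression.
-/

open Finset Filter Topology

variable {V : Type*} [Fintype V] [DecidableEq V]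

namespace SimpleGraph
variable (G : SimpleGraph V) [DecidableRel G.Adj]

/-- The Bethe entropy function `S^B(x)` on edge vectors. -/
noncomputable def SBethe (x : G.edgeSet → ℝ) : ℝ :=
  (1 / 2) * ∑ v : V,
    ((∑ e ∈ G.incE v, (-(x e * Real.log (x e)) + (1 - x e) * Real.log (1 - x e))) -
      2 * (1 - ∑ e ∈ G.incE v, x e) * Real.log (1 - ∑ e ∈ G.incE v, x e))

/-- The fractional matching polytope `FM(G)`. -/
def FMSet : Set (G.edgeSet → ℝ) :=
  {x | (∀ e, 0 ≤ x e) ∧ ∀ v : V, ∑ e ∈ G.incE v, x e ≤ 1}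

end SimpleGraph

namespace SimpleGraph
variable (G : SimpleGraph V) [DecidableRel G.Adj]

/-- Marginal of `μ` on the edges incident to `v`. -/
noncomputable def margV (μ : (G.edgeSet → Bool) → ℝ) (v : V)
    (b : {e : G.edgeSet // e ∈ G.incE v} → Bool) : ℝ :=
  ∑ B : G.edgeSet → Bool,
    if ∀ e : {e : G.edgeSet // e ∈ G.incE v}, B e.1 = b e then μ B else 0

/-- Marginal of `μ` on the edge `e`. -/
noncomputable def margE (μ : (G.edgeSet → Bool) → ℝ) (e : G.edgeSet) (b : Bool) : ℝ :=
  ∑ B : G.edgeSet → Bool, if B e = b then μ B else 0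

end SimpleGraph

namespace BetheMatching

/-- The vectors in `{0,1}^I` with at most one nonzero entry: the zero vector (`none`) and the unit
vectors (`some i`). -/
def starVec {I : Type*} [DecidableEq I] : Option I → I → Bool
  | none => fun _ => false
  | some i => fun j => decide (j = i)

lemma starVec_injective {I : Type*} [DecidableEq I] :
    Function.Injective (starVec : Option I → I → Bool) := by
  rintro (_ | i) (_ | j) h
  · rfl
  · simpa [starVec] using congrFun h j
  · simpa [starVec] using congrFun h i
  · simpa [starVec] using congrFun h i

lemma exists_starVec {I : Type*} [Fintype I] [DecidableEq I] (b : I → Bool)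
    (hb : (∑ i, if b i then 1 else 0) ≤ 1) : ∃ o, starVec o = b := by
  rw [← Finset.card_filter, Finset.card_le_one] at hb
  by_cases h : ∃ i, b i = true
  · obtain ⟨i, hi⟩ := h
    refine ⟨some i, funext fun j => ?_⟩
    by_cases hj : b j = true
    · have : j = i := hb j (by simpa using hj) i (by simpa using hi)
      simp [starVec, this, hi]
    · have : j ≠ i := by rintro rfl; exact hj hi
      simp [starVec, this, hj]
  · push Not at h
    exact ⟨none, funext fun j => by simp [starVec, h j]⟩

/-- A function vanishing on vectors with two or more nonzero entries is summed over the zero vector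
and the unit vectors only. -/
lemma sum_eq_starVec {I : Type*} [Fintype I] [DecidableEq I] (f : (I → Bool) → ℝ)
    (hf : ∀ b, ¬ (∑ i, if b i then 1 else 0) ≤ 1 → f b = 0) :
    ∑ b, f b = f (starVec none) + ∑ i, f (starVec (some i)) := by
  rw [← Fintype.sum_option (f := fun o => f (starVec o))]
  refine (Fintype.sum_of_injective starVec starVec_injective _ _ (fun b hb => hf b ?_)
    (fun _ => rfl)).symm
  exact fun h => hb (exists_starVec b h)

variable (G : SimpleGraph V) [DecidableRel G.Adj]

/-- Double counting: every edge belongs to the stars of exactly its two endpoints. -/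
lemma sum_sum_incE (h : G.edgeSet → ℝ) : ∑ v : V, ∑ e ∈ G.incE v, h e = 2 * ∑ e, h e := by
  simp only [SimpleGraph.incE, Finset.sum_filter]
  rw [Finset.sum_comm, Finset.mul_sum]
  refine Finset.sum_congr rfl fun e _ => ?_
  obtain ⟨e, he⟩ := e
  induction e using Sym2.ind with
  | _ a c =>
    have hac : a ≠ c := G.ne_of_adj he
    rw [← Finset.sum_filter]
    have : (Finset.univ.filter fun v => v ∈ s(a, c)) = {a, c} := by
      ext v; simp
    simp only [this, Finset.sum_const, Finset.card_pair hac]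
    simp

variable {G}

/-- Two edges of a matching that share an endpoint coincide. -/
lemma eq_of_matching {B : G.edgeSet → Bool} (hB : G.IsMatchingVec B) {v : V}
    {e f : G.edgeSet} (he : e ∈ G.incE v) (hf : f ∈ G.incE v) (hBe : B e = true)
    (hBf : B f = true) : e = f := by
  have h := hB v
  rw [← Finset.card_filter, Finset.card_le_one] at h
  simp only [SimpleGraph.incE, Finset.mem_filter, Finset.mem_univ, true_and] at he hf
  exact h e (by simp [hBe, he]) f (by simp [hBf, hf])

lemma sum_margV (μ : (G.edgeSet → Bool) → ℝ) (v : V) : ∑ b, G.margV μ v b = ∑ B, μ B := by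
  unfold SimpleGraph.margV
  rw [Finset.sum_comm]
  refine Finset.sum_congr rfl fun B _ => ?_
  rw [Finset.sum_eq_single (fun e => B e.1)]
  · simp
  · intro b _ hb
    rw [if_neg]
    exact fun h => hb (funext fun e => (h e).symm)
  · simp

lemma margV_nonneg {μ : (G.edgeSet → Bool) → ℝ} (hpos : ∀ B, 0 ≤ μ B) (v : V)
    (b : {e : G.edgeSet // e ∈ G.incE v} → Bool) : 0 ≤ G.margV μ v b := by
  refine Finset.sum_nonneg fun B _ => ?_
  split_ifs
  exacts [hpos B, le_rfl]

lemma margV_eq_zero {μ : (G.edgeSet → Bool) → ℝ} (hsupp : ∀ B, μ B ≠ 0 → G.IsMatchingVec B)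
    (v : V) (b : {e : G.edgeSet // e ∈ G.incE v} → Bool)
    (hb : ¬ (∑ e, if b e then 1 else 0) ≤ 1) : G.margV μ v b = 0 := by
  refine Finset.sum_eq_zero fun B _ => ?_
  split_ifs with h
  · by_contra hB
    refine hb ?_
    rw [← Finset.card_filter, Finset.card_le_one]
    intro e he f hf
    simp only [Finset.mem_filter, Finset.mem_univ, true_and] at he hf
    exact Subtype.ext (eq_of_matching (hsupp B hB) e.2 f.2 ((h e).trans he) ((h f).trans hf))
  · rfl

lemma margV_some {μ : (G.edgeSet → Bool) → ℝ} (hsupp : ∀ B, μ B ≠ 0 → G.IsMatchingVec B)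
    (v : V) (e : {e : G.edgeSet // e ∈ G.incE v}) :
    G.margV μ v (starVec (some e)) = ∑ B : G.edgeSet → Bool, if B e.1 then μ B else 0 := by
  refine Finset.sum_congr rfl fun B _ => ?_
  by_cases hB : μ B = 0
  · simp [hB]
  refine if_congr ⟨fun h => by simpa [starVec] using h e, fun h f => ?_⟩ rfl rfl
  by_cases hf : B f.1 = true
  · have : f = e := Subtype.ext (eq_of_matching (hsupp B hB) f.2 e.2 hf h)
    simp [starVec, this, h]
  · have : f ≠ e := by rintro rfl; exact hf h
    simp [starVec, this, hf]

/-- The zero vector receives the mass left over by the unit vectors. -/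
lemma margV_none {μ : (G.edgeSet → Bool) → ℝ} (hsum : ∑ B, μ B = 1)
    (hsupp : ∀ B, μ B ≠ 0 → G.IsMatchingVec B) {x : G.edgeSet → ℝ}
    (hx : ∀ e, x e = ∑ B : G.edgeSet → Bool, if B e then μ B else 0) (v : V) :
    G.margV μ v (starVec none) = 1 - ∑ e ∈ G.incE v, x e := by
  have h := sum_eq_starVec (G.margV μ v) (margV_eq_zero hsupp v)
  simp only [sum_margV, hsum, margV_some hsupp, ← hx] at h
  rw [Finset.sum_coe_sort (G.incE v) x] at h
  linarith

lemma margE_true {μ : (G.edgeSet → Bool) → ℝ} {x : G.edgeSet → ℝ}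
    (hx : ∀ e, x e = ∑ B : G.edgeSet → Bool, if B e then μ B else 0) (e : G.edgeSet) :
    G.margE μ e true = x e := (hx e).symm

lemma margE_false {μ : (G.edgeSet → Bool) → ℝ} (hsum : ∑ B, μ B = 1) {x : G.edgeSet → ℝ}
    (hx : ∀ e, x e = ∑ B : G.edgeSet → Bool, if B e then μ B else 0) (e : G.edgeSet) :
    G.margE μ e false = 1 - x e := by
  rw [eq_sub_iff_add_eq, hx, ← hsum, SimpleGraph.margE, ← Finset.sum_add_distrib]
  refine Finset.sum_congr rfl fun B _ => ?_
  cases B e <;> simp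

end BetheMatching

open BetheMatching

/-- For a distribution `μ` supported on matchings, with `x_e = μ(B_e = 1)`: `x ∈ FM(G)`, the
marginal on `∂v` is the hard-core product distribution, and the Bethe entropy of `μ` equals
`S^B(x)`. -/
theorem bethe_entropy_of_matching_distribution (G : SimpleGraph V) [DecidableRel G.Adj]
    (μ : (G.edgeSet → Bool) → ℝ) (hpos : ∀ B, 0 ≤ μ B) (hsum : ∑ B, μ B = 1)
    (hsupp : ∀ B, μ B ≠ 0 → G.IsMatchingVec B)
    (x : G.edgeSet → ℝ) (hx : ∀ e, x e = ∑ B : G.edgeSet → Bool, if B e then μ B else 0) :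
    x ∈ G.FMSet ∧
    (∀ v : V, ∀ b : {e : G.edgeSet // e ∈ G.incE v} → Bool,
      (∑ e : {e : G.edgeSet // e ∈ G.incE v}, if b e then 1 else 0) ≤ 1 →
      G.margV μ v b =
        (1 - ∑ e ∈ G.incE v, x e) ^
            (1 - ∑ e : {e : G.edgeSet // e ∈ G.incE v}, if b e then 1 else 0 : ℕ) *
          ∏ e : {e : G.edgeSet // e ∈ G.incE v}, if b e then x e.1 else 1) ∧
    (-(∑ v : V, ∑ b : {e : G.edgeSet // e ∈ G.incE v} → Bool,
          G.margV μ v b * Real.log (G.margV μ v b)) +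
        ∑ e : G.edgeSet, ∑ b : Bool, G.margE μ e b * Real.log (G.margE μ e b)) =
      G.SBethe x := by
  refine ⟨⟨fun e => ?_, fun v => ?_⟩, fun v b hb => ?_, ?_⟩
  · rw [hx]
    refine Finset.sum_nonneg fun B _ => ?_
    split_ifs
    exacts [hpos B, le_rfl]
  · have h := margV_nonneg hpos v (starVec none)
    rw [margV_none hsum hsupp hx] at h
    linarith
  · obtain ⟨_ | e, rfl⟩ := exists_starVec b hb
    · rw [margV_none hsum hsupp hx]
      simp [starVec]
    · rw [margV_some hsupp, ← hx]
      simp [starVec]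
  · have hV : ∀ v : V, ∑ b, G.margV μ v b * Real.log (G.margV μ v b) =
        (1 - ∑ e ∈ G.incE v, x e) * Real.log (1 - ∑ e ∈ G.incE v, x e) +
          ∑ e ∈ G.incE v, x e * Real.log (x e) := by
      intro v
      rw [sum_eq_starVec _ fun b hb => by rw [margV_eq_zero hsupp v b hb, zero_mul]]
      simp only [margV_none hsum hsupp hx, margV_some hsupp, ← hx]
      rw [Finset.sum_coe_sort (G.incE v) fun e => x e * Real.log (x e)]
    simp only [hV, Fintype.sum_bool, margE_true hx, margE_false hsum hx, SimpleGraph.SBethe,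
      Finset.sum_add_distrib, Finset.sum_sub_distrib, Finset.sum_neg_distrib, sum_sum_incE,
      mul_assoc, ← Finset.mul_sum]
    ring
end

section
/- For any k ≥ 1, the function g : Δ^k → ℝ defined by g(x) = −Σ_{i=1}^k x_i ln x_i + Σ_{i=1}^k (1−x_i) ln(1−x_i) − 2(1 − Σ_{i=1}^k x_i) ln(1 − Σ_{i=1}^k x_i) (with 0·ln 0 = 0) is concave on Δ^k, and on the interior of Δ^k its partial derivatives are ∂g/∂x_i = ln( (1 − Σ_j x_j)² / (x_i(1−x_i)) ). -/
/-!
In terms of `η(s) = -s log s`, the function is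
`g(x) = ∑ᵢ (η(xᵢ) - η(1 - xᵢ)) + 2 η(x₀)`, where `x₀ = 1 - ∑ᵢ xᵢ`.
Concavity is checked along each segment of the simplex, by the sign of the second derivative.
In direction `h`, with `h₀ = -∑ᵢ hᵢ`, the required inequality is
`∑ᵢ hᵢ² (1/(1 - xᵢ) - 1/xᵢ) ≤ 2 h₀² / x₀`.

At most one coordinate `xₘ` exceeds `1/2`, and only its term can be positive. Put `b = 1 - xₘ`
and `c = (1 - 2b)/(1 - b)`, which lies in `[0, 1]`. Since `xᵢ ≤ b` for `i ≠ m`, the remaining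
weights satisfy `1/xᵢ - 1/(1 - xᵢ) ≥ c/xᵢ`. As `hₘ = -(h₀ + ∑_{i ≠ m} hᵢ)` and
`b = x₀ + ∑_{i ≠ m} xᵢ`, the Cauchy-Schwarz inequality gives
`hₘ² / b ≤ h₀² / x₀ + ∑_{i ≠ m} hᵢ² / xᵢ`; multiplying by `c` bounds the positive term, because
`1/(1 - xₘ) - 1/xₘ = c/b`.

Boundary segments need no approximation argument: a coordinate vanishing at an interior point
of a segment in the simplex vanishes along the whole segment, so its term is constant.
-/

open Finset Filter Topology

variable {V : Type*} [Fintype V] [DecidableEq V]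

/-- The function `g` on the simplex `Δ^k`. -/
noncomputable def gSimplex (k : ℕ) (x : Fin k → ℝ) : ℝ :=
  (∑ i, (-(x i * Real.log (x i)) + (1 - x i) * Real.log (1 - x i))) -
    2 * (1 - ∑ i, x i) * Real.log (1 - ∑ i, x i)

/-! ### The Hessian inequality -/

/-- Cauchy-Schwarz in the form `(h₀ + ∑ hᵢ)² ≤ (x₀ + ∑ xᵢ)(h₀²/x₀ + ∑ hᵢ²/xᵢ)`, where a
vanishing weight is allowed as long as the corresponding numerator vanishes. -/
lemma sq_add_sum_le_mul_div {ι : Type*} (s : Finset ι) (x h : ι → ℝ) (x0 h0 : ℝ)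
    (hx : ∀ i ∈ s, 0 ≤ x i) (hx0 : 0 ≤ x0) (hz : ∀ i ∈ s, x i = 0 → h i = 0)
    (hz0 : x0 = 0 → h0 = 0) :
    (h0 + ∑ i ∈ s, h i) ^ 2 ≤
      (x0 + ∑ i ∈ s, x i) * (h0 ^ 2 / x0 + ∑ i ∈ s, h i ^ 2 / x i) := by
  have key : ∀ a u : ℝ, (a = 0 → u = 0) → u ^ 2 = a * (u ^ 2 / a) := by
    intro a u hau
    by_cases ha : a = 0
    · simp [ha, hau ha]
    · field_simp
  have := Finset.sum_sq_le_sum_mul_sum_of_sq_le_mul (s.insertNone)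
    (r := fun o => o.elim h0 h) (f := fun o => o.elim x0 x)
    (g := fun o => o.elim (h0 ^ 2 / x0) (fun i => h i ^ 2 / x i))
    (by
      rintro (_ | i) hi
      · exact hx0
      · exact hx i (by simpa using hi))
    (by
      rintro (_ | i) hi
      · exact div_nonneg (sq_nonneg _) hx0
      · exact div_nonneg (sq_nonneg _) (hx i (by simpa using hi)))
    (by
      rintro (_ | i) hi
      · exact (key _ _ hz0).le
      · exact (key _ _ (hz i (by simpa using hi))).le)
  simpa [Finset.sum_insertNone] using this

/-- The Hessian of `g` is negative semidefinite, in the form used along segments: vanishing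
coordinates are allowed provided that the direction does not move them. -/
lemma gSimplex_hessian_nonpos {ι : Type*} [Fintype ι] [DecidableEq ι] (x h : ι → ℝ)
    (hx : ∀ i, 0 ≤ x i) (hs : ∑ i, x i ≤ 1) (hz : ∀ i, x i = 0 → h i = 0)
    (hz0 : 1 - ∑ i, x i = 0 → ∑ i, h i = 0) :
    ∑ i, (h i ^ 2 / (1 - x i) - h i ^ 2 / x i) ≤ 2 * ((∑ i, h i) ^ 2 / (1 - ∑ i, x i)) := by
  have hx0 : 0 ≤ 1 - ∑ i, x i := by linarith
  have hR : 0 ≤ (∑ i, h i) ^ 2 / (1 - ∑ i, x i) := div_nonneg (sq_nonneg _) hx0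
  by_cases hm : ∃ m, 1 / 2 < x m
  · obtain ⟨m, hm⟩ := hm
    have sx := Finset.add_sum_erase Finset.univ x (Finset.mem_univ m)
    have sh := Finset.add_sum_erase Finset.univ h (Finset.mem_univ m)
    have st := Finset.add_sum_erase Finset.univ
      (fun i => h i ^ 2 / (1 - x i) - h i ^ 2 / x i) (Finset.mem_univ m)
    have cs := sq_add_sum_le_mul_div (Finset.univ.erase m) x h (1 - ∑ i, x i) (-∑ i, h i)
      (fun i _ => hx i) hx0 (fun i _ => hz i) (fun e => by rw [hz0 e, neg_zero])
    rw [show -∑ i, h i + ∑ i ∈ Finset.univ.erase m, h i = - h m by linarith,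
      show 1 - ∑ i, x i + ∑ i ∈ Finset.univ.erase m, x i = 1 - x m by linarith,
      neg_sq, neg_sq] at cs
    set R := (∑ i, h i) ^ 2 / (1 - ∑ i, x i) with hRdef
    set T := ∑ i ∈ Finset.univ.erase m, h i ^ 2 / x i with hT
    have hT0 : 0 ≤ T := Finset.sum_nonneg fun i _ => div_nonneg (sq_nonneg _) (hx i)
    have hxm1 : x m ≤ 1 := by
      have := Finset.single_le_sum (fun i _ => hx i) (Finset.mem_univ m)
      linarith
    -- `c = (1 - 2b)/(1 - b)` with `b = 1 - xₘ`
    set c := (2 * x m - 1) / x m with hc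
    have hc0 : 0 ≤ c := div_nonneg (by linarith) (by linarith)
    have hc1 : c ≤ 1 := by rw [hc, div_le_one (by linarith)]; linarith
    have hother : ∀ i ∈ Finset.univ.erase m,
        h i ^ 2 / (1 - x i) - h i ^ 2 / x i ≤ -(c * (h i ^ 2 / x i)) := by
      intro i hi
      have hib : x i ≤ 1 - x m := by
        have := Finset.single_le_sum (f := x) (fun i _ => hx i) hi
        linarith
      rcases (hx i).eq_or_lt with h0 | h0
      · simp [hz i h0.symm]
      · have h1 : 0 < 1 - x i := by linarith
        have hm0 : 0 < x m := by linarith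
        have e : h i ^ 2 / x i - c * (h i ^ 2 / x i) - h i ^ 2 / (1 - x i)
            = h i ^ 2 * (1 - x m - x i) / (x i * x m * (1 - x i)) := by
          rw [hc]; field_simp; ring
        have : 0 ≤ h i ^ 2 * (1 - x m - x i) / (x i * x m * (1 - x i)) :=
          div_nonneg (mul_nonneg (sq_nonneg _) (by linarith)) (by positivity)
        linarith
    have hsum := Finset.sum_le_sum hother
    rw [Finset.sum_neg_distrib, ← Finset.mul_sum, ← hT] at hsum
    have hbig : h m ^ 2 / (1 - x m) - h m ^ 2 / x m ≤ c * (R + T) := by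
      rcases hxm1.eq_or_lt with h1 | h1
      · -- here `1 - xₘ = 0`, so the Cauchy-Schwarz bound forces `hₘ = 0`
        have : h m ^ 2 = 0 := by
          rw [h1, sub_self, zero_mul] at cs
          exact le_antisymm cs (sq_nonneg _)
        rw [this]
        simpa using mul_nonneg hc0 (add_nonneg hR hT0)
      · have hb : 0 < 1 - x m := by linarith
        have hm0 : 0 < x m := by linarith
        have e : h m ^ 2 / (1 - x m) - h m ^ 2 / x m = c * (h m ^ 2 / (1 - x m)) := by
          rw [hc]; field_simp; ring
        rw [e]
        exact mul_le_mul_of_nonneg_left ((div_le_iff₀' hb).2 cs) hc0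
    have : c * R ≤ R := mul_le_of_le_one_left hR hc1
    rw [← st]
    linarith
  · push Not at hm
    refine (Finset.sum_nonpos fun i _ => ?_).trans (by linarith)
    rcases (hx i).eq_or_lt with h0 | h0
    · simp [hz i h0.symm]
    · have := div_le_div_of_nonneg_left (sq_nonneg (h i)) h0
        (show x i ≤ 1 - x i by linarith [hm i])
      linarith

/-! ### Concavity along segments -/

/-- A nonnegative affine function vanishing at an interior point of `[0, 1]` is constant. -/
lemma affine_eq_zero_imp {p q t : ℝ} (hp : 0 ≤ p) (hq : 0 ≤ q) (ht0 : 0 < t) (ht1 : t < 1)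
    (h : p + t * (q - p) = 0) : q - p = 0 := by
  have h1 : 0 ≤ (1 - t) * p := mul_nonneg (by linarith) hp
  have h2 : 0 ≤ t * q := mul_nonneg ht0.le hq
  have h3 : (1 - t) * p = 0 := by linarith
  have h4 : t * q = 0 := by linarith
  rcases mul_eq_zero.1 h3 with h | h <;> rcases mul_eq_zero.1 h4 with h' | h' <;> linarith

lemma hasDerivAt_affine (p q t : ℝ) :
    HasDerivAt (fun t : ℝ => p + t * (q - p)) (q - p) t := by
  simpa using ((hasDerivAt_id t).mul_const (q - p)).const_add p

/-- When the affine function vanishes at `t` it is identically zero, and so are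
the composite and the claimed derivative; hence positivity at `t` is not needed. -/
lemma hasDerivAt_negMulLog_affine {p q t : ℝ} (hp : 0 ≤ p) (hq : 0 ≤ q) (ht0 : 0 < t)
    (ht1 : t < 1) :
    HasDerivAt (fun t : ℝ => Real.negMulLog (p + t * (q - p)))
      ((q - p) * (-Real.log (p + t * (q - p)) - 1)) t := by
  by_cases h : p + t * (q - p) = 0
  · simp only [affine_eq_zero_imp hp hq ht0 ht1 h, mul_zero, zero_mul]
    exact hasDerivAt_const _ _
  · have := (Real.hasDerivAt_negMulLog h).comp t (hasDerivAt_affine p q t)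
    rw [mul_comm] at this
    exact this

lemma hasDerivAt_negMulLog_affine' {p q t : ℝ} (hp : 0 ≤ p) (hq : 0 ≤ q) (ht0 : 0 < t)
    (ht1 : t < 1) :
    HasDerivAt (fun t : ℝ => (q - p) * (-Real.log (p + t * (q - p)) - 1))
      (-((q - p) ^ 2 / (p + t * (q - p)))) t := by
  by_cases h : p + t * (q - p) = 0
  · simp only [affine_eq_zero_imp hp hq ht0 ht1 h, mul_zero, zero_mul]
    simpa using hasDerivAt_const t (0 : ℝ)
  · have := (((hasDerivAt_affine p q t).log h).neg.sub_const 1).const_mul (q - p)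
    refine this.congr_deriv ?_
    ring

lemma gSimplex_eq_negMulLog (k : ℕ) (x : Fin k → ℝ) :
    gSimplex k x = ∑ i, (Real.negMulLog (x i) - Real.negMulLog (1 - x i)) +
      2 * Real.negMulLog (1 - ∑ i, x i) := by
  simp only [gSimplex, Real.negMulLog]
  rw [sub_eq_add_neg]
  congr 1
  · exact Finset.sum_congr rfl fun i _ => by ring
  · ring

/-- Concavity along a segment of the simplex, its endpoints possibly on the boundary. -/
lemma gSimplex_segment_concave (k : ℕ) (x y : Fin k → ℝ) (hx : ∀ i, 0 ≤ x i)
    (hxs : ∑ i, x i ≤ 1) (hy : ∀ i, 0 ≤ y i) (hys : ∑ i, y i ≤ 1) :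
    ConcaveOn ℝ (Set.Icc (0 : ℝ) 1) (fun t => gSimplex k (fun i => x i + t * (y i - x i))) := by
  have le1 : ∀ z : Fin k → ℝ, (∀ i, 0 ≤ z i) → ∑ i, z i ≤ 1 → ∀ i, 0 ≤ 1 - z i := by
    intro z hz hzs i
    have := Finset.single_le_sum (fun i _ => hz i) (Finset.mem_univ i)
    linarith
  have hsum : ∀ t : ℝ, ∑ i, (x i + t * (y i - x i)) = ∑ i, x i + t * (∑ i, y i - ∑ i, x i) := by
    intro t
    rw [Finset.sum_add_distrib, ← Finset.mul_sum, Finset.sum_sub_distrib]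
  -- all arguments of `negMulLog` are written as `p + t * (q - p)` with `p, q ≥ 0`
  have hfun : (fun t : ℝ => gSimplex k (fun i => x i + t * (y i - x i))) = fun t =>
      ∑ i, (Real.negMulLog (x i + t * (y i - x i)) -
        Real.negMulLog ((1 - x i) + t * ((1 - y i) - (1 - x i)))) +
      2 * Real.negMulLog ((1 - ∑ i, x i) + t * ((1 - ∑ i, y i) - (1 - ∑ i, x i))) := by
    funext t
    rw [gSimplex_eq_negMulLog, hsum]
    congr 1
    · refine Finset.sum_congr rfl fun i _ => ?_
      congr 2; ring
    · congr 2; ring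
  rw [hfun]
  refine concaveOn_of_hasDerivWithinAt2_nonpos (convex_Icc 0 1) ?_
    (f' := fun t => ∑ i, ((y i - x i) * (-Real.log (x i + t * (y i - x i)) - 1) -
        ((1 - y i) - (1 - x i)) *
          (-Real.log ((1 - x i) + t * ((1 - y i) - (1 - x i))) - 1)) +
      2 * (((1 - ∑ i, y i) - (1 - ∑ i, x i)) *
        (-Real.log ((1 - ∑ i, x i) + t * ((1 - ∑ i, y i) - (1 - ∑ i, x i))) - 1)))
    (f'' := fun t => ∑ i, (-((y i - x i) ^ 2 / (x i + t * (y i - x i))) -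
        -(((1 - y i) - (1 - x i)) ^ 2 / ((1 - x i) + t * ((1 - y i) - (1 - x i))))) +
      2 * -(((1 - ∑ i, y i) - (1 - ∑ i, x i)) ^ 2 /
        ((1 - ∑ i, x i) + t * ((1 - ∑ i, y i) - (1 - ∑ i, x i))))) ?_ ?_ ?_
  · apply Continuous.continuousOn
    refine (continuous_finsetSum _ fun i _ => ?_).add (continuous_const.mul ?_)
    · exact (Real.continuous_negMulLog.comp (by fun_prop)).sub
        (Real.continuous_negMulLog.comp (by fun_prop))
    · exact Real.continuous_negMulLog.comp (by fun_prop)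
  · intro t ht
    rw [interior_Icc] at ht
    exact ((HasDerivAt.fun_sum fun i _ =>
      (hasDerivAt_negMulLog_affine (hx i) (hy i) ht.1 ht.2).sub
        (hasDerivAt_negMulLog_affine (le1 x hx hxs i) (le1 y hy hys i) ht.1 ht.2)).add
      ((hasDerivAt_negMulLog_affine (sub_nonneg.2 hxs) (sub_nonneg.2 hys) ht.1 ht.2).const_mul
        2)).hasDerivWithinAt
  · intro t ht
    rw [interior_Icc] at ht
    exact ((HasDerivAt.fun_sum fun i _ =>
      (hasDerivAt_negMulLog_affine' (hx i) (hy i) ht.1 ht.2).sub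
        (hasDerivAt_negMulLog_affine' (le1 x hx hxs i) (le1 y hy hys i) ht.1 ht.2)).add
      ((hasDerivAt_negMulLog_affine' (sub_nonneg.2 hxs) (sub_nonneg.2 hys) ht.1 ht.2).const_mul
        2)).hasDerivWithinAt
  · intro t ht
    rw [interior_Icc] at ht
    have conv : ∀ p q : ℝ, 0 ≤ p → 0 ≤ q → 0 ≤ p + t * (q - p) := by
      intro p q hp hq
      have h1 : 0 ≤ (1 - t) * p := mul_nonneg (by linarith [ht.2]) hp
      have h2 : 0 ≤ t * q := mul_nonneg ht.1.le hq
      linarith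
    have hslack : 1 - ∑ i, (x i + t * (y i - x i)) =
        (1 - ∑ i, x i) + t * ((1 - ∑ i, y i) - (1 - ∑ i, x i)) := by rw [hsum]; ring
    have main := gSimplex_hessian_nonpos (fun i => x i + t * (y i - x i)) (fun i => y i - x i)
      (fun i => conv _ _ (hx i) (hy i))
      (by
        have := conv _ _ (sub_nonneg.2 hxs) (sub_nonneg.2 hys)
        rw [← hslack] at this
        linarith)
      (fun i => affine_eq_zero_imp (hx i) (hy i) ht.1 ht.2)
      (fun e => by
        rw [hslack] at e
        have := affine_eq_zero_imp (sub_nonneg.2 hxs) (sub_nonneg.2 hys) ht.1 ht.2 e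
        rw [Finset.sum_sub_distrib]
        linarith)
    rw [hslack, Finset.sum_sub_distrib y x,
      show (∑ i, y i - ∑ i, x i) ^ 2 = ((1 - ∑ i, y i) - (1 - ∑ i, x i)) ^ 2 by ring] at main
    have e : ∀ i, -((y i - x i) ^ 2 / (x i + t * (y i - x i))) -
        -(((1 - y i) - (1 - x i)) ^ 2 / ((1 - x i) + t * ((1 - y i) - (1 - x i)))) =
        (y i - x i) ^ 2 / (1 - (x i + t * (y i - x i))) -
          (y i - x i) ^ 2 / (x i + t * (y i - x i)) := by
      intro i
      rw [show ((1 - y i) - (1 - x i)) ^ 2 = (y i - x i) ^ 2 by ring,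
        show (1 - x i) + t * ((1 - y i) - (1 - x i)) = 1 - (x i + t * (y i - x i)) by ring]
      ring
    simp only [e]
    linarith

/-! ### Partial derivatives -/

lemma gSimplex_hasDerivAt_update (k : ℕ) (x : Fin k → ℝ) (hx : ∀ i, 0 < x i)
    (hs : ∑ i, x i < 1) (i : Fin k) :
    HasDerivAt (fun t => gSimplex k (Function.update x i t))
      (Real.log ((1 - ∑ j, x j) ^ 2 / (x i * (1 - x i)))) (x i) := by
  have hx1 : 0 < 1 - x i := by
    have := Finset.single_le_sum (fun i _ => (hx i).le) (Finset.mem_univ i)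
    linarith
  have hsx := Finset.add_sum_erase Finset.univ x (Finset.mem_univ i)
  have hsplit : ∀ (F : ℝ → ℝ) (t : ℝ), ∑ j, F (Function.update x i t j) =
      F t + ∑ j ∈ Finset.univ.erase i, F (x j) := by
    intro F t
    rw [← Finset.add_sum_erase Finset.univ _ (Finset.mem_univ i), Function.update_self]
    congr 1
    refine Finset.sum_congr rfl fun j hj => ?_
    rw [Function.update_of_ne (Finset.ne_of_mem_erase hj)]
  have hfun : (fun t => gSimplex k (Function.update x i t)) = fun t =>
      (Real.negMulLog t - Real.negMulLog (1 - t) +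
        ∑ j ∈ Finset.univ.erase i, (Real.negMulLog (x j) - Real.negMulLog (1 - x j))) +
      2 * Real.negMulLog (1 - (t + ∑ j ∈ Finset.univ.erase i, x j)) := by
    funext t
    rw [gSimplex_eq_negMulLog, hsplit (fun s => Real.negMulLog s - Real.negMulLog (1 - s)),
      hsplit (fun s => s)]
  have hslack : 1 - (x i + ∑ j ∈ Finset.univ.erase i, x j) = 1 - ∑ j, x j := by rw [hsx]
  have d1 := Real.hasDerivAt_negMulLog (hx i).ne'
  have d2 := (Real.hasDerivAt_negMulLog hx1.ne').comp (x i) ((hasDerivAt_id (x i)).const_sub 1)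
  have d3 := (Real.hasDerivAt_negMulLog (x := 1 - (x i + ∑ j ∈ Finset.univ.erase i, x j))
    (by rw [hslack]; linarith)).comp (x i)
    (((hasDerivAt_id (x i)).add_const (∑ j ∈ Finset.univ.erase i, x j)).const_sub 1)
  rw [hfun]
  have d := ((d1.sub d2).add_const
    (∑ j ∈ Finset.univ.erase i, (Real.negMulLog (x j) - Real.negMulLog (1 - x j)))).add
    (d3.const_mul 2)
  refine d.congr_deriv ?_
  rw [hslack, Real.log_div (pow_pos (by linarith) 2).ne' (mul_pos (hx i) hx1).ne',
    Real.log_mul (hx i).ne' hx1.ne', Real.log_pow]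
  push_cast
  ring

/-- `g` is concave on the simplex `Δ^k`, and on the interior its partial derivatives are
`∂g/∂x_i = ln((1 − Σ_j x_j)² / (x_i (1 − x_i)))`. -/
theorem gSimplex_concave_and_deriv (k : ℕ) (hk : 1 ≤ k) :
    ConcaveOn ℝ {x : Fin k → ℝ | (∀ i, 0 ≤ x i) ∧ ∑ i, x i ≤ 1} (gSimplex k) ∧
    ∀ x : Fin k → ℝ, (∀ i, 0 < x i) → (∑ i, x i) < 1 → ∀ i : Fin k,
      HasDerivAt (fun t => gSimplex k (Function.update x i t))
        (Real.log ((1 - ∑ j, x j) ^ 2 / (x i * (1 - x i)))) (x i) := by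
  refine ⟨⟨?_, ?_⟩, gSimplex_hasDerivAt_update k⟩
  · rintro x ⟨hx, hxs⟩ y ⟨hy, hys⟩ a b ha hb hab
    refine ⟨fun i => add_nonneg (mul_nonneg ha (hx i)) (mul_nonneg hb (hy i)), ?_⟩
    simp only [Pi.add_apply, Pi.smul_apply, smul_eq_mul, Finset.sum_add_distrib,
      ← Finset.mul_sum]
    nlinarith
  · rintro x ⟨hx, hxs⟩ y ⟨hy, hys⟩ a b ha hb hab
    have := (gSimplex_segment_concave k x y hx hxs hy hys).2
      (Set.left_mem_Icc.2 zero_le_one) (Set.right_mem_Icc.2 zero_le_one) ha hb hab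
    have e : a • x + b • y = fun i => x i + b * (y i - x i) := by
      funext i
      simp only [Pi.add_apply, Pi.smul_apply, smul_eq_mul]
      rw [← sub_eq_of_eq_add hab.symm]
      ring
    rw [e]
    simpa using this
end

section
/- For any finite simple graph G, the Bethe entropy function S^B(x) = (1/2) Σ_{v∈V} { Σ_{e ∋ v} ( −x_e ln x_e + (1−x_e) ln(1−x_e) ) − 2(1 − Σ_{e ∋ v} x_e) ln(1 − Σ_{e ∋ v} x_e) } (with 0·ln 0 = 0) is non-negative and concave on the fractional matching polytope FM(G). -/
/-!
The Bethe entropy is a sum of vertex terms, and each vertex term is concave and non-negative.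
Put `s(x) = -x ln x + (1 - x) ln (1 - x)` and let `S` be the sum of the `x_e` over the edges at a
vertex. Since `s(1 - S) = -s(S)`, the vertex term equals

  `(∑ s(x_e) - s(S)) + h(S)`,

where `h` is the binary entropy, which is concave and non-negative. For the first summand
(`defect`), adding the edges one at a time makes it a telescoping sum of terms
`T(a, b) = s(a) + s(b) - s(a + b)` (`tri`), with `a = x_e` and `b` the sum over earlier edges.
So everything rests on `T` being concave and non-negative on the triangle `a, b, 1 - a - b ≥ 0`.

With `c = 1 - a - b`, `T = s(a) + s(b) + s(c)`, and its second derivative in a direction `(u, v)` is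
`-(α u² + β v² + γ (u + v)²)` with `α = (1 - 2a) / (a (1 - a))` and similarly `β`, `γ`.
Semidefiniteness of this form follows from `α + γ > 0` and `αβ + βγ + γα ≥ 0`; the latter because
`∑ (1 - 2a)(1 - 2b) c (1 - c) = 2abc` when `a + b + c = 1` (`quad_nonneg`).
Finally `T` vanishes where `a`, `b` or `c` is zero, which handles segments inside the
boundary of the triangle, and also gives `T ≥ 0` by concavity, as `(a, b)` lies between
`(a + b, 0)` and `(0, a + b)`.
-/

open Finset Filter Topology

variable {V : Type*} [Fintype V] [DecidableEq V]

namespace SimpleGraph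

/-! ### The edge function and the merging defect -/

/-- The edge contribution `s(x) = -x ln x + (1 - x) ln (1 - x)`. -/
noncomputable def sEnt (x : ℝ) : ℝ := Real.negMulLog x - Real.negMulLog (1 - x)

/-- The merging defect `T(a, b) = s(a) + s(b) - s(a + b)`. -/
noncomputable def tri (p : ℝ × ℝ) : ℝ := sEnt p.1 + sEnt p.2 - sEnt (p.1 + p.2)

/-- The triangle of sub-probability pairs. -/
def triSet : Set (ℝ × ℝ) := {p | 0 ≤ p.1 ∧ 0 ≤ p.2 ∧ p.1 + p.2 ≤ 1}

lemma sEnt_zero : sEnt 0 = 0 := by simp [sEnt]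

lemma sEnt_symm (x : ℝ) : sEnt (1 - x) = -sEnt x := by simp [sEnt]

lemma continuous_sEnt : Continuous sEnt := by
  unfold sEnt
  exact Real.continuous_negMulLog.sub (Real.continuous_negMulLog.comp (by fun_prop))

lemma tri_zero_left (b : ℝ) : tri (0, b) = 0 := by simp [tri, sEnt_zero]

lemma tri_zero_right (a : ℝ) : tri (a, 0) = 0 := by simp [tri, sEnt_zero]

lemma tri_of_add_eq_one {a b : ℝ} (h : a + b = 1) : tri (a, b) = 0 := by
  obtain rfl : b = 1 - a := by linarith
  have h1 : sEnt 1 = 0 := by simp [sEnt]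
  simp [tri, sEnt_symm, h1]

/-- The derivative of `s` is `-ln x - ln (1 - x) - 2`. -/
lemma hasDerivAt_sEnt {x : ℝ} (h0 : x ≠ 0) (h1 : 1 - x ≠ 0) :
    HasDerivAt sEnt (-Real.log x - Real.log (1 - x) - 2) x := by
  have h := (Real.hasDerivAt_negMulLog h0).sub
    ((Real.hasDerivAt_negMulLog h1).comp x ((hasDerivAt_id x).const_sub 1))
  refine h.congr_deriv ?_
  ring

/-- The second derivative of `s` is `-1/x + 1/(1 - x)`. -/
lemma hasDerivAt_sEnt' {x : ℝ} (h0 : x ≠ 0) (h1 : 1 - x ≠ 0) :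
    HasDerivAt (fun x => -Real.log x - Real.log (1 - x) - 2) (-x⁻¹ + (1 - x)⁻¹) x := by
  have h := ((Real.hasDerivAt_log h0).neg.sub
    ((Real.hasDerivAt_log h1).comp x ((hasDerivAt_id x).const_sub 1))).sub_const 2
  refine h.congr_deriv ?_
  ring

/-! ### Concavity and non-negativity of the merging defect -/

/-- The Hessian of `T` is negative semidefinite in the interior of the triangle. -/
lemma quad_nonneg {a b c : ℝ} (ha : 0 < a) (hb : 0 < b) (hc : 0 < c) (h : a + b + c = 1)
    (u v : ℝ) :
    (-a⁻¹ + (1 - a)⁻¹) * u ^ 2 + (-b⁻¹ + (1 - b)⁻¹) * v ^ 2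
      + (-c⁻¹ + (1 - c)⁻¹) * (u + v) ^ 2 ≤ 0 := by
  have ha' : 0 < 1 - a := by linarith
  have hb' : 0 < 1 - b := by linarith
  have hc' : 0 < 1 - c := by linarith
  -- the coefficients of the form after clearing denominators, up to sign
  set P := (1 - 2 * a) * (b * (1 - b) * (c * (1 - c))) with hP
  set Q := (1 - 2 * b) * (a * (1 - a) * (c * (1 - c))) with hQ
  set R := (1 - 2 * c) * (a * (1 - a) * (b * (1 - b))) with hR
  have hPR : 0 < P + R := by
    have e : P + R = b * (1 - b) * (b * (a * (1 - c) + c * (1 - a))) := by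
      obtain rfl : b = 1 - a - c := by linarith
      rw [hP, hR]; ring
    rw [e]; positivity
  have hdet : 0 ≤ P * Q + Q * R + R * P := by
    have e : P * Q + Q * R + R * P
        = a * (1 - a) * (b * (1 - b)) * (c * (1 - c)) * (2 * a * b * c) := by
      obtain rfl : b = 1 - a - c := by linarith
      rw [hP, hQ, hR]; ring
    rw [e]; positivity
  have hform : 0 ≤ P * u ^ 2 + Q * v ^ 2 + R * (u + v) ^ 2 := by
    refine nonneg_of_mul_nonneg_right (a := P + R) ?_ hPR
    have e : (P + R) * (P * u ^ 2 + Q * v ^ 2 + R * (u + v) ^ 2)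
        = ((P + R) * u + R * v) ^ 2 + (P * Q + Q * R + R * P) * v ^ 2 := by ring
    rw [e]; positivity
  have e : (-a⁻¹ + (1 - a)⁻¹) * u ^ 2 + (-b⁻¹ + (1 - b)⁻¹) * v ^ 2
      + (-c⁻¹ + (1 - c)⁻¹) * (u + v) ^ 2
      = -((P * u ^ 2 + Q * v ^ 2 + R * (u + v) ^ 2)
        / (a * (1 - a) * (b * (1 - b)) * (c * (1 - c)))) := by
    rw [hP, hQ, hR]
    field_simp
    ring
  rw [e, neg_nonpos]
  positivity

/-- `T` is concave along a segment of the triangle, from `(a, b)` in direction `(u, v)`, whose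
relative interior lies in the open triangle. -/
lemma concaveOn_line {a b u v : ℝ}
    (hA : ∀ t ∈ Set.Ioo (0 : ℝ) 1, 0 < a + t * u) (hB : ∀ t ∈ Set.Ioo (0 : ℝ) 1, 0 < b + t * v)
    (hC : ∀ t ∈ Set.Ioo (0 : ℝ) 1, 0 < 1 - (a + t * u) - (b + t * v)) :
    ConcaveOn ℝ (Set.Icc 0 1) (fun t : ℝ => tri (a + t * u, b + t * v)) := by
  have hlin : ∀ a u t : ℝ, HasDerivAt (fun t : ℝ => a + t * u) u t := fun a u t => by
    simpa using ((hasDerivAt_id t).mul_const u).const_add a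
  have hsum : ∀ t : ℝ, HasDerivAt (fun t : ℝ => a + t * u + (b + t * v)) (u + v) t :=
    fun t => (hlin a u t).add (hlin b v t)
  let d : ℝ → ℝ := fun x => -Real.log x - Real.log (1 - x) - 2
  let d' : ℝ → ℝ := fun x => -x⁻¹ + (1 - x)⁻¹
  refine concaveOn_of_hasDerivWithinAt2_nonpos (convex_Icc 0 1)
    (f' := fun t => d (a + t * u) * u + d (b + t * v) * v
      - d (a + t * u + (b + t * v)) * (u + v))
    (f'' := fun t => d' (a + t * u) * u * u + d' (b + t * v) * v * v
      - d' (a + t * u + (b + t * v)) * (u + v) * (u + v)) ?_ ?_ ?_ ?_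
  · have := continuous_sEnt
    unfold tri
    fun_prop
  all_goals
    intro t ht
    rw [interior_Icc] at ht
    have h1 := hA t ht
    have h2 := hB t ht
    have h3 := hC t ht
    have n1 : 1 - (a + t * u) ≠ 0 := by intro h; linarith
    have n2 : 1 - (b + t * v) ≠ 0 := by intro h; linarith
    have n3 : a + t * u + (b + t * v) ≠ 0 := by intro h; linarith
    have n4 : 1 - (a + t * u + (b + t * v)) ≠ 0 := by intro h; linarith
  · exact ((((hasDerivAt_sEnt h1.ne' n1).comp t (hlin a u t)).add
      ((hasDerivAt_sEnt h2.ne' n2).comp t (hlin b v t))).sub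
      ((hasDerivAt_sEnt n3 n4).comp t (hsum t))).hasDerivWithinAt
  · exact (((((hasDerivAt_sEnt' h1.ne' n1).comp t (hlin a u t)).mul_const u).add
      (((hasDerivAt_sEnt' h2.ne' n2).comp t (hlin b v t)).mul_const v)).sub
      (((hasDerivAt_sEnt' n3 n4).comp t (hsum t)).mul_const (u + v))).hasDerivWithinAt
  · have h := quad_nonneg h1 h2 h3 (by ring) u v
    simp only [d']
    have e : 1 - (1 - (a + t * u) - (b + t * v)) = a + t * u + (b + t * v) := by ring
    have e' : 1 - (a + t * u) - (b + t * v) = 1 - (a + t * u + (b + t * v)) := by ring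
    rw [e, e'] at h
    linarith

/-- An affine function that is non-negative at `0` and `1` either vanishes on the segment or is
positive in its interior. -/
lemma affine_dichotomy {a a' : ℝ} (h : 0 ≤ a) (h' : 0 ≤ a') :
    (a = 0 ∧ a' = 0) ∨ ∀ t ∈ Set.Ioo (0 : ℝ) 1, 0 < a + t * (a' - a) := by
  by_cases h0 : a = 0 ∧ a' = 0
  · exact Or.inl h0
  · right
    rintro t ⟨ht0, ht1⟩
    have e : a + t * (a' - a) = (1 - t) * a + t * a' := by ring
    rw [e]
    rcases h.lt_or_eq with ha | ha
    · have := mul_pos (sub_pos.2 ht1) ha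
      have := mul_nonneg ht0.le h'
      linarith
    · have ha' : 0 < a' := lt_of_le_of_ne h' fun h2 => h0 ⟨ha.symm, h2.symm⟩
      have := mul_pos ht0 ha'
      rw [← ha]; linarith

lemma convex_triSet : Convex ℝ triSet := by
  rintro ⟨a, b⟩ ⟨ha, hb, hc⟩ ⟨a', b'⟩ ⟨ha', hb', hc'⟩ p q hp hq hpq
  simp only at ha hb hc ha' hb' hc'
  simp only [triSet, Set.mem_ofPred_eq, Prod.smul_mk, Prod.mk_add_mk, smul_eq_mul]
  exact ⟨by positivity, by positivity, by nlinarith⟩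

lemma concaveOn_tri : ConcaveOn ℝ triSet tri := by
  refine ⟨convex_triSet, ?_⟩
  rintro ⟨a, b⟩ ⟨ha, hb, hc⟩ ⟨a', b'⟩ ⟨ha', hb', hc'⟩ p q hp hq hpq
  simp only at ha hb hc ha' hb' hc'
  simp only [Prod.smul_mk, Prod.mk_add_mk, smul_eq_mul]
  obtain rfl : p = 1 - q := by linarith
  rcases affine_dichotomy ha ha' with ⟨rfl, rfl⟩ | hA
  · simp [tri_zero_left]
  rcases affine_dichotomy hb hb' with ⟨rfl, rfl⟩ | hB
  · simp [tri_zero_right]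
  rcases affine_dichotomy (a := 1 - a - b) (a' := 1 - a' - b')
    (by linarith) (by linarith) with ⟨h1, h2⟩ | hC
  · rw [tri_of_add_eq_one (by linarith : a + b = 1), tri_of_add_eq_one (by linarith : a' + b' = 1),
      tri_of_add_eq_one]
    · simp
    · linear_combination (-(1 - q)) * h1 - q * h2
  have key := (concaveOn_line hA hB fun t ht => by
    have := hC t ht
    linarith).2 (Set.left_mem_Icc.2 zero_le_one) (Set.right_mem_Icc.2 zero_le_one) hp hq hpq
  simp only [smul_eq_mul, mul_zero, mul_one, zero_add, zero_mul, one_mul, add_zero,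
    add_sub_cancel] at key
  convert key using 3 <;> ring

lemma tri_nonneg {p : ℝ × ℝ} (hp : p ∈ triSet) : 0 ≤ tri p := by
  obtain ⟨a, b⟩ := p
  obtain ⟨ha, hb, hc⟩ := hp
  simp only at ha hb hc
  rcases eq_or_ne (a + b) 0 with h | h
  · obtain rfl : a = 0 := by linarith
    rw [tri_zero_left]
  · -- `(a, b)` as a convex combination of `(a + b, 0)` and `(0, a + b)`
    have hpos : 0 < a + b := lt_of_le_of_ne (by positivity) h.symm
    have hx : (a + b, (0 : ℝ)) ∈ triSet := ⟨hpos.le, le_rfl, by simpa using hc⟩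
    have hy : ((0 : ℝ), a + b) ∈ triSet := ⟨le_rfl, hpos.le, by simpa using hc⟩
    have hw : a / (a + b) + b / (a + b) = 1 := by field_simp
    have key := concaveOn_tri.2 hx hy (by positivity) (by positivity) hw
    simp only [tri_zero_left, tri_zero_right, Prod.smul_mk, Prod.mk_add_mk, smul_eq_mul, mul_zero,
      add_zero, zero_add, div_mul_cancel₀ _ h] at key
    exact key

/-! ### Vertex terms -/

section Vertex

variable {ι : Type*}

/-- Non-negative vectors whose sum over `s` is at most `1`. -/
def subProb (s : Finset ι) : Set (ι → ℝ) := {x | (∀ i, 0 ≤ x i) ∧ ∑ i ∈ s, x i ≤ 1}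

/-- `∑ s(x_i) - s(∑ x_i)`, the sum of `s` over the probability vector completing `x`. -/
noncomputable def defect (s : Finset ι) (x : ι → ℝ) : ℝ :=
  ∑ i ∈ s, sEnt (x i) - sEnt (∑ i ∈ s, x i)

lemma convex_subProb (s : Finset ι) : Convex ℝ (subProb s) := by
  rintro x ⟨hx, hx'⟩ y ⟨hy, hy'⟩ p q hp hq hpq
  refine ⟨fun i => ?_, ?_⟩
  · have := hx i
    have := hy i
    simp only [Pi.add_apply, Pi.smul_apply, smul_eq_mul]
    positivity
  · simp only [Pi.add_apply, Pi.smul_apply, smul_eq_mul, Finset.sum_add_distrib,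
      ← Finset.mul_sum]
    nlinarith

/-- Adding the index `j` to `s` increases the defect by `T(x_j, ∑_{i ∈ s} x_i)`, so the properties
of `T` carry over by induction. -/
lemma defect_concave_nonneg [DecidableEq ι] (s : Finset ι) :
    ConcaveOn ℝ (subProb s) (defect s) ∧ ∀ x ∈ subProb s, 0 ≤ defect s x := by
  induction s using Finset.induction_on with
  | empty =>
    have h : (defect (∅ : Finset ι)) = fun _ => 0 := by
      funext x; simp [defect, sEnt_zero]
    rw [h]
    exact ⟨concaveOn_const 0 (convex_subProb _), fun _ _ => le_rfl⟩
  | insert j s hj ih =>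
    -- the pair `(x_j, ∑_{i ∈ s} x_i)` of masses being merged
    let L : (ι → ℝ) →ₗ[ℝ] ℝ × ℝ :=
      (LinearMap.proj j).prod (∑ i ∈ s, LinearMap.proj i)
    have hL : ∀ x, L x = (x j, ∑ i ∈ s, x i) := fun x => by simp [L]
    have hdec : defect (insert j s) = fun x => defect s x + tri (L x) := by
      funext x
      simp only [defect, tri, hL, Finset.sum_insert hj]
      ring
    have hsub : subProb (insert j s) ⊆ subProb s := fun x ⟨h0, h1⟩ => by
      rw [Finset.sum_insert hj] at h1
      exact ⟨h0, by linarith [h0 j]⟩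
    have hmaps : ∀ x ∈ subProb (insert j s), L x ∈ triSet := fun x ⟨h0, h1⟩ => by
      rw [Finset.sum_insert hj] at h1
      rw [hL]
      exact ⟨h0 j, Finset.sum_nonneg fun i _ => h0 i, h1⟩
    rw [hdec]
    exact ⟨(ih.1.subset hsub (convex_subProb _)).add
      ((concaveOn_tri.comp_linearMap L).subset hmaps (convex_subProb _)),
      fun x hx => add_nonneg (ih.2 x (hsub hx)) (tri_nonneg (hmaps x hx))⟩

lemma binEntropy_sum_concave (s : Finset ι) :
    ConcaveOn ℝ (subProb s) (fun x => Real.binEntropy (∑ i ∈ s, x i)) := by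
  let L : (ι → ℝ) →ₗ[ℝ] ℝ := ∑ i ∈ s, LinearMap.proj i
  have hL : ∀ x, L x = ∑ i ∈ s, x i := fun x => by simp [L]
  have h := (Real.strictConcave_binEntropy.concaveOn.comp_linearMap L).subset
    (s := subProb s) (fun x hx => by
      rw [Set.mem_preimage, hL]
      exact ⟨Finset.sum_nonneg fun i _ => hx.1 i, hx.2⟩) (convex_subProb s)
  exact h.congr fun x _ => by simp only [Function.comp, hL]

end Vertex

/-! ### The Bethe entropy -/

/-- The vertex terms split as `(∑ s(x_e) - s(S)) + h(S)`. -/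
lemma SBethe_eq (G : SimpleGraph V) [DecidableRel G.Adj] (x : G.edgeSet → ℝ) :
    G.SBethe x = (1 / 2) * ∑ v : V,
      (defect (G.incE v) x + Real.binEntropy (∑ e ∈ G.incE v, x e)) := by
  unfold SBethe
  congr 1
  refine Finset.sum_congr rfl fun v _ => ?_
  have h : ∀ y : ℝ, -(y * Real.log y) + (1 - y) * Real.log (1 - y) = sEnt y := fun y => by
    simp only [sEnt, Real.negMulLog]; ring
  simp only [h, defect, Real.binEntropy_eq_negMulLog_add_negMulLog_one_sub]
  simp only [sEnt, Real.negMulLog]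
  ring

lemma FMSet_subset (G : SimpleGraph V) [DecidableRel G.Adj] (v : V) :
    G.FMSet ⊆ subProb (G.incE v) := fun _ hx => ⟨hx.1, hx.2 v⟩

lemma convex_FMSet (G : SimpleGraph V) [DecidableRel G.Adj] : Convex ℝ G.FMSet :=
  fun x hx y hy p q hp hq hpq =>
    ⟨fun e => by
      have := hx.1 e
      have := hy.1 e
      simp only [Pi.add_apply, Pi.smul_apply, smul_eq_mul]
      positivity,
     fun v => (convex_subProb _ (FMSet_subset G v hx) (FMSet_subset G v hy) hp hq hpq).2⟩

end SimpleGraph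

lemma concaveOn_finset_sum {ι E : Type*} [AddCommMonoid E] [Module ℝ E] {C : Set E} (hC : Convex ℝ C)
    (s : Finset ι) (f : ι → E → ℝ) (h : ∀ i ∈ s, ConcaveOn ℝ C (f i)) :
    ConcaveOn ℝ C (fun x => ∑ i ∈ s, f i x) := by
  classical
  induction s using Finset.induction_on with
  | empty => simpa using concaveOn_const (0 : ℝ) hC
  | insert j s hj ih =>
    simp only [Finset.sum_insert hj]
    exact (h j (Finset.mem_insert_self _ _)).add
      (ih fun i hi => h i (Finset.mem_insert_of_mem hi))

/-- The Bethe entropy `S^B` is non-negative and concave on the fractional matching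
polytope `FM(G)`. -/
theorem SBethe_nonneg_concave (G : SimpleGraph V) [DecidableRel G.Adj] :
    (∀ x ∈ G.FMSet, 0 ≤ G.SBethe x) ∧ ConcaveOn ℝ G.FMSet G.SBethe := by
  constructor
  · intro x hx
    rw [SimpleGraph.SBethe_eq]
    refine mul_nonneg (by norm_num) (Finset.sum_nonneg fun v _ => add_nonneg ?_ ?_)
    · exact (SimpleGraph.defect_concave_nonneg _).2 x (SimpleGraph.FMSet_subset G v hx)
    · exact Real.binEntropy_nonneg (Finset.sum_nonneg fun e _ => hx.1 e) (hx.2 v)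
  · rw [funext (SimpleGraph.SBethe_eq G)]
    refine ConcaveOn.smul (c := (1 / 2 : ℝ)) (by norm_num)
      (concaveOn_finset_sum (SimpleGraph.convex_FMSet G) _ _ fun v _ => ?_)
    exact ((SimpleGraph.defect_concave_nonneg _).1.add
      (SimpleGraph.binEntropy_sum_concave _)).subset
      (SimpleGraph.FMSet_subset G v) (SimpleGraph.convex_FMSet G)
end

section
/- For any finite simple graph G and any z > 0, the Bethe free entropy Φ^B(x; z) = (Σ_{e∈E} x_e) ln z + S^B(x) attains its supremum over the fractional matching polytope FM(G) at the point x(z): sup_{x ∈ FM(G)} Φ^B(x; z) = Φ^B(x(z); z). -/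
/-!
The Bethe free entropy is concave on the fractional matching polytope and its gradient vanishes at
`x(z)`. Concavity is used only through the tangent inequality at the point `a = x(z)`, which is
established separately at each vertex.

*Local inequality.* Put `D(x, a) = -x ln (x / a) + (1 - x) ln ((1 - x) / (1 - a))`. At a vertex with
incident values `x_e`, `a_e` and slacks `s = 1 - ∑ x_e`, `t = 1 - ∑ a_e`, the gap between the local
entropy and its tangent at `a` is `∑ D(x_e, a_e) - 2 s ln (s / t)`. The function `D` is
superadditive, `D(p, a) + D(q, b) ≤ D(p + q, a + b)` (`betheGap_add_le`), hence
`∑ D(x_e, a_e) ≤ D(1 - s, 1 - t) = -D(s, t)`, and what remains is minus a binary Kullback-Leibler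
divergence.

*Superadditivity.* Since `D(1 - x, 1 - a) = -D(x, a)`, superadditivity is the symmetric
statement `D(p, a) + D(q, b) + D(r, c) ≤ 0` for probability vectors `(p, q, r)` and `(a, b, c)`. The
left side is the sum of `p ln (w_p / p)` with `w_p = a (1 - q) (1 - r) / ((1 - b) (1 - c))` and its
analogues, so `ln t ≤ t - 1` reduces it to `w_p + w_q + w_r ≤ 1`. This polynomial inequality is
the negativity of a quadratic form on the plane of vectors with coordinate sum zero.

*Stationarity.* With `m_v` the total message into `v`, the fixed point equation gives
`Y_{u→v} (1 + m_u) = z + Y_{u→v} Y_{v→u}`. So `x_e(z) = Y_{w→v} / (1 + m_v)` for `e = vw`, the slack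
at `v` is `1 / (1 + m_v)`, and `x_e (1 - x_e) = z t_u t_v` for `e = uv`: the derivative of the free
entropy in each coordinate is zero.
-/

open Finset Filter Topology

variable {V : Type*} [Fintype V] [DecidableEq V]

/-! ### One-variable and three-variable entropy inequalities -/

/-- The gap between `-x ln x + (1 - x) ln (1 - x)` and its tangent at `a`, up to an affine term
that cancels at each vertex. -/
noncomputable def betheGap (x a : ℝ) : ℝ :=
  -(x * (Real.log x - Real.log a)) + (1 - x) * (Real.log (1 - x) - Real.log (1 - a))

lemma mul_log_sub_log_le {p w : ℝ} (hp : 0 ≤ p) (hw : 0 ≤ w) (h : w = 0 → p = 0) :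
    p * (Real.log w - Real.log p) ≤ w - p := by
  rcases hp.eq_or_lt with rfl | hp
  · simpa using hw
  have hw : 0 < w := lt_of_le_of_ne hw (fun h' => hp.ne' (h h'.symm))
  rw [← Real.log_div hw.ne' hp.ne']
  have := Real.log_le_sub_one_of_pos (div_pos hw hp)
  calc p * Real.log (w / p) ≤ p * (w / p - 1) := mul_le_mul_of_nonneg_left this hp.le
    _ = w - p := by field_simp

/-- The polynomial inequality behind superadditivity of `betheGap`: the difference of the two
sides is a nonnegative quadratic form in `(p - a, q - b)`. -/
lemma betheGap_poly {p q r a b c : ℝ} (ha : 0 < a) (hb : 0 < b) (hc : 0 < c)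
    (hs : p + q + r = 1) (hs' : a + b + c = 1) :
    a * (1 - a) * ((1 - q) * (1 - r)) + b * (1 - b) * ((1 - p) * (1 - r))
      + c * (1 - c) * ((1 - p) * (1 - q)) ≤ (1 - a) * (1 - b) * (1 - c) := by
  obtain rfl : r = 1 - p - q := by linarith
  obtain rfl : c = 1 - a - b := by linarith
  have hA : 0 < a * (1 - a) := mul_pos ha (by linarith)
  -- completing the square in the form `A y² + (A + B - C) x y + B x²`
  have key : 0 ≤ a * (1 - a) * (q - b) ^ 2 + b * (1 - b) * (p - a) ^ 2
      + (a * (1 - a) + b * (1 - b) - (1 - a - b) * (a + b)) * ((p - a) * (q - b)) := by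
    have hdisc : 0 ≤ a * b * (1 - a - b) * (p - a) ^ 2 := by positivity
    have : 0 ≤ (a * (1 - a)) * (a * (1 - a) * (q - b) ^ 2 + b * (1 - b) * (p - a) ^ 2
      + (a * (1 - a) + b * (1 - b) - (1 - a - b) * (a + b)) * ((p - a) * (q - b))) := by
      nlinarith [sq_nonneg (a * (1 - a) * (q - b) + a * b * (p - a)), hdisc]
    exact nonneg_of_mul_nonneg_right this hA
  linarith

/-- The three-term inequality when no coordinate of `(p, q, r)` equals `1`. -/
lemma betheGap_three {p q r a b c : ℝ} (hp : 0 ≤ p) (hq : 0 ≤ q) (hr : 0 ≤ r)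
    (hp1 : p < 1) (hq1 : q < 1) (hr1 : r < 1)
    (ha : 0 < a) (hb : 0 < b) (hc : 0 < c)
    (hs : p + q + r = 1) (hs' : a + b + c = 1) :
    betheGap p a + betheGap q b + betheGap r c ≤ 0 := by
  have ha1 : 0 < 1 - a := by linarith
  have hb1 : 0 < 1 - b := by linarith
  have hc1 : 0 < 1 - c := by linarith
  have hp2 : 0 < 1 - p := by linarith
  have hq2 : 0 < 1 - q := by linarith
  have hr2 : 0 < 1 - r := by linarith
  have aux : ∀ {p a q r b c : ℝ}, 0 ≤ p → 0 < a → 0 < 1 - q → 0 < 1 - r → 0 < 1 - b → 0 < 1 - c →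
      p * (Real.log a + Real.log (1 - q) + Real.log (1 - r) - Real.log (1 - b)
        - Real.log (1 - c) - Real.log p) ≤ a * (1 - q) * (1 - r) / ((1 - b) * (1 - c)) - p := by
    intro p a q r b c hp ha hq hr hb hc
    have hw : 0 < a * (1 - q) * (1 - r) / ((1 - b) * (1 - c)) := by positivity
    have := mul_log_sub_log_le hp hw.le (fun h => absurd h hw.ne')
    rw [Real.log_div (by positivity) (by positivity), Real.log_mul (by positivity) hr.ne',
      Real.log_mul ha.ne' hq.ne', Real.log_mul hb.ne' hc.ne'] at this
    rw [← sub_sub] at this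
    exact this
  have h1 := aux hp ha hq2 hr2 hb1 hc1
  have h2 := aux hq hb hp2 hr2 ha1 hc1
  have h3 := aux hr hc hp2 hq2 ha1 hb1
  have hw : a * (1 - q) * (1 - r) / ((1 - b) * (1 - c))
      + b * (1 - p) * (1 - r) / ((1 - a) * (1 - c))
      + c * (1 - p) * (1 - q) / ((1 - a) * (1 - b)) ≤ 1 := by
    have hk := betheGap_poly (p := p) (q := q) (r := r) ha hb hc hs hs'
    have : a * (1 - q) * (1 - r) / ((1 - b) * (1 - c))
      + b * (1 - p) * (1 - r) / ((1 - a) * (1 - c))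
      + c * (1 - p) * (1 - q) / ((1 - a) * (1 - b))
      = (a * (1 - a) * ((1 - q) * (1 - r)) + b * (1 - b) * ((1 - p) * (1 - r))
      + c * (1 - c) * ((1 - p) * (1 - q))) / ((1 - a) * (1 - b) * (1 - c)) := by
      field_simp
    rw [this, div_le_one (by positivity)]
    exact hk
  obtain rfl : r = 1 - p - q := by linarith
  unfold betheGap
  linarith

/-- Superadditivity of `betheGap`. -/
lemma betheGap_add_le {p q a b : ℝ} (hp : 0 ≤ p) (hq : 0 ≤ q) (hpq : p + q ≤ 1)
    (ha : 0 < a) (hb : 0 < b) (hab : a + b < 1) :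
    betheGap p a + betheGap q b ≤ betheGap (p + q) (a + b) := by
  -- `r = 1`, `p = 1` and `q = 1` are the vertices of the simplex, where `1 - p` etc. may vanish
  rcases (show p = 0 ∧ q = 0 ∨ p = 1 ∧ q = 0 ∨ p = 0 ∧ q = 1 ∨ (0 < p + q ∧ p < 1 ∧ q < 1) by
    grind) with
    ⟨rfl, rfl⟩ | ⟨rfl, rfl⟩ | ⟨rfl, rfl⟩ | ⟨h0, h1, h2⟩
  · have : Real.log (1 - (a + b)) ≤ Real.log ((1 - a) * (1 - b)) :=
      Real.log_le_log (by linarith) (by nlinarith)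
    rw [Real.log_mul (by linarith) (by linarith)] at this
    simp [betheGap]
    linarith
  · have : Real.log a ≤ Real.log ((a + b) * (1 - b)) :=
      Real.log_le_log (by linarith) (by nlinarith)
    rw [Real.log_mul (by linarith) (by linarith)] at this
    simp [betheGap]
    linarith
  · have : Real.log b ≤ Real.log ((a + b) * (1 - a)) :=
      Real.log_le_log (by linarith) (by nlinarith)
    rw [Real.log_mul (by linarith) (by linarith)] at this
    simp [betheGap]
    linarith
  · have := betheGap_three hp hq (r := 1 - (p + q)) (by linarith) h1 h2 (by linarith)
      ha hb (c := 1 - (a + b)) (by linarith) (by ring) (by ring)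
    simp only [betheGap, sub_sub_cancel] at this ⊢
    linarith

/-! ### The tangent inequality at a vertex -/

lemma sum_betheGap_le {ι : Type*} [DecidableEq ι] (s : Finset ι) (x a : ι → ℝ)
    (hx : ∀ i ∈ s, 0 ≤ x i) (ha : ∀ i ∈ s, 0 < a i)
    (hxs : ∑ i ∈ s, x i ≤ 1) (has : ∑ i ∈ s, a i < 1) :
    ∑ i ∈ s, betheGap (x i) (a i) ≤ betheGap (∑ i ∈ s, x i) (∑ i ∈ s, a i) := by
  induction s using Finset.induction_on with
  | empty => simp [betheGap]
  | insert i s hi ih =>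
    rcases s.eq_empty_or_nonempty with rfl | hne
    · simp
    rw [Finset.sum_insert hi] at hxs has
    rw [Finset.sum_insert hi, Finset.sum_insert hi, Finset.sum_insert hi]
    have hxi := hx i (Finset.mem_insert_self i s)
    have hai := ha i (Finset.mem_insert_self i s)
    have hx' : ∀ j ∈ s, 0 ≤ x j := fun j hj => hx j (Finset.mem_insert_of_mem hj)
    have ha' : ∀ j ∈ s, 0 < a j := fun j hj => ha j (Finset.mem_insert_of_mem hj)
    have h1 := ih hx' ha' (by linarith) (by linarith)
    have h2 := betheGap_add_le hxi (Finset.sum_nonneg hx') hxs hai (Finset.sum_pos ha' hne) has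
    linarith

/-- The local Bethe entropy lies below its tangent at an interior point `a`. -/
lemma bethe_tangent {ι : Type*} [DecidableEq ι] (s : Finset ι) (x a : ι → ℝ)
    (hx : ∀ i ∈ s, 0 ≤ x i) (ha : ∀ i ∈ s, 0 < a i)
    (hxs : ∑ i ∈ s, x i ≤ 1) (has : ∑ i ∈ s, a i < 1) :
    ((∑ i ∈ s, (-(x i * Real.log (x i)) + (1 - x i) * Real.log (1 - x i))) -
      2 * (1 - ∑ i ∈ s, x i) * Real.log (1 - ∑ i ∈ s, x i)) ≤
    ((∑ i ∈ s, (-(a i * Real.log (a i)) + (1 - a i) * Real.log (1 - a i))) -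
      2 * (1 - ∑ i ∈ s, a i) * Real.log (1 - ∑ i ∈ s, a i)) +
    ∑ i ∈ s, (x i - a i) *
      (2 * Real.log (1 - ∑ j ∈ s, a j) - Real.log (a i) - Real.log (1 - a i)) := by
  have h1 := sum_betheGap_le s x a hx ha hxs has
  have hX : 0 ≤ ∑ i ∈ s, x i := Finset.sum_nonneg hx
  have hA : 0 ≤ ∑ i ∈ s, a i := Finset.sum_nonneg fun i hi => (ha i hi).le
  have h2 := mul_log_sub_log_le (p := 1 - ∑ i ∈ s, x i) (w := 1 - ∑ i ∈ s, a i)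
    (by linarith) (by linarith) (fun h => by linarith)
  have h3 := mul_log_sub_log_le hX hA (fun h => by
    rcases s.eq_empty_or_nonempty with rfl | hne
    · simp
    · exact absurd h (Finset.sum_pos ha hne).ne')
  have h4 : ∑ i ∈ s, betheGap (x i) (a i) =
      (∑ i ∈ s, (-(x i * Real.log (x i)) + (1 - x i) * Real.log (1 - x i)))
      - (∑ i ∈ s, (-(a i * Real.log (a i)) + (1 - a i) * Real.log (1 - a i)))
      - ∑ i ∈ s, (x i - a i) *
      (2 * Real.log (1 - ∑ j ∈ s, a j) - Real.log (a i) - Real.log (1 - a i))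
      + 2 * Real.log (1 - ∑ j ∈ s, a j) * (∑ i ∈ s, x i - ∑ i ∈ s, a i) := by
    rw [← Finset.sum_sub_distrib, ← Finset.sum_sub_distrib, ← Finset.sum_sub_distrib,
      Finset.mul_sum, ← Finset.sum_add_distrib]
    refine Finset.sum_congr rfl fun i _ => ?_
    unfold betheGap
    ring
  rw [h4] at h1
  unfold betheGap at h1
  linarith

/-! ### Belief propagation fixed points -/

namespace SimpleGraph

/-- The fixed point equation in terms of the total message into `u`. -/
lemma IsBPFixed.mul_inFlow {G : SimpleGraph V} [DecidableRel G.Adj] {z : ℝ} {Y : G.DEdge → ℝ}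
    (hY : G.IsBPFixed z Y) {u v : V} (h : G.Adj u v) :
    Y ⟨(u, v), h⟩ * (1 + G.inFlow Y u) = z + Y ⟨(u, v), h⟩ * Y ⟨(v, u), h.symm⟩ := by
  -- messages extended by zero, to remove the dependent sums
  let y : V → V → ℝ := fun a b => if h : G.Adj a b then Y ⟨(a, b), h⟩ else 0
  have hin : G.inFlow Y u = ∑ w ∈ G.neighborFinset u, y w u := by
    rw [← Finset.sum_attach]
    refine Finset.sum_congr rfl fun w _ => ?_
    have hw : G.Adj w.1 u := ((mem_neighborFinset _ _ _).mp w.2).symm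
    simp only [y, dif_pos hw]
  have hex : G.exclSum Y u v = ∑ w ∈ (G.neighborFinset u).erase v, y w u := by
    rw [← Finset.sum_attach]
    refine Finset.sum_congr rfl fun w _ => ?_
    have hw : G.Adj w.1 u := ((mem_neighborFinset _ _ _).mp (Finset.mem_of_mem_erase w.2)).symm
    simp only [y, dif_pos hw]
  have hsum : G.inFlow Y u = G.exclSum Y u v + Y ⟨(v, u), h.symm⟩ := by
    rw [hin, hex, ← Finset.sum_erase_add _ _ ((mem_neighborFinset _ _ _).mpr h)]
    simp [y, h.symm]
  have h0 : 0 ≤ G.exclSum Y u v := Finset.sum_nonneg fun w _ => (hY.1 _).le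
  have hfix := hY.2 ⟨(u, v), h⟩
  simp only [bpR] at hfix
  have h1 : Y ⟨(u, v), h⟩ * (1 + G.exclSum Y u v) = z := by
    rw [hfix]
    field_simp
  rw [hsum]
  linarith

/-- Summation over the edges at `v` as summation over the neighbours of `v`. -/
lemma sum_incE (G : SimpleGraph V) [DecidableRel G.Adj] (v : V) (f : G.edgeSet → ℝ) :
    ∑ e ∈ G.incE v, f e = ∑ w ∈ (G.neighborFinset v).attach,
      f ⟨s(v, w.1), G.mem_edgeSet.mpr ((mem_neighborFinset _ _ _).mp w.2)⟩ := by
  symm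
  refine Finset.sum_bij
    (fun w _ => ⟨s(v, w.1), G.mem_edgeSet.mpr ((mem_neighborFinset _ _ _).mp w.2)⟩) ?_ ?_ ?_ ?_
  · intro w _
    simp [incE]
  · intro w₁ _ w₂ _ h
    exact Subtype.ext (Sym2.congr_right.mp (congrArg Subtype.val h))
  · rintro ⟨e, he⟩ hv
    have hv : v ∈ e := by simpa [incE] using hv
    obtain ⟨w, rfl⟩ := Sym2.mem_iff_exists.mp hv
    exact ⟨⟨w, (mem_neighborFinset _ _ _).mpr (G.mem_edgeSet.mp he)⟩, Finset.mem_attach _ _, rfl⟩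
  · intro w _
    rfl

/-- Double counting of vertex-edge incidences. -/
lemma sum_sum_incE (G : SimpleGraph V) [DecidableRel G.Adj] (f : V → G.edgeSet → ℝ) :
    ∑ v : V, ∑ e ∈ G.incE v, f v e =
      ∑ e : G.edgeSet, ∑ v ∈ Finset.univ.filter (fun v => v ∈ (e : Sym2 V)), f v e := by
  refine Finset.sum_comm' ?_
  intro v e
  simp [incE]

end SimpleGraph

/-- The Bethe free entropy `Φ^B(x; z) = (Σ_e x_e) ln z + S^B(x)` attains its supremum over
`FM(G)` at `x(z)`. -/
theorem bethe_free_entropy_max (G : SimpleGraph V) [DecidableRel G.Adj]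
    (z : ℝ) (hz : 0 < z) (Y : G.DEdge → ℝ) (hY : G.IsBPFixed z Y)
    (xz : G.edgeSet → ℝ)
    (hxz : ∀ u v (h : G.Adj u v), xz ⟨s(u, v), G.mem_edgeSet.mpr h⟩ =
      Y ⟨(u, v), h⟩ * Y ⟨(v, u), h.symm⟩ / (z + Y ⟨(u, v), h⟩ * Y ⟨(v, u), h.symm⟩)) :
    IsGreatest {s : ℝ | ∃ x ∈ G.FMSet, s = (∑ e : G.edgeSet, x e) * Real.log z + G.SBethe x}
      ((∑ e : G.edgeSet, xz e) * Real.log z + G.SBethe xz) := by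
  have hm : ∀ v, 0 < 1 + G.inFlow Y v := fun v =>
    add_pos_of_pos_of_nonneg one_pos (Finset.sum_nonneg fun w _ => (hY.1 _).le)
  have hval : ∀ u v (h : G.Adj u v), xz ⟨s(u, v), G.mem_edgeSet.mpr h⟩ =
      Y ⟨(v, u), h.symm⟩ / (1 + G.inFlow Y u) := by
    intro u v h
    rw [hxz u v h, ← hY.mul_inFlow h]
    exact mul_div_mul_left _ _ (hY.1 _).ne'
  have hpos : ∀ e, 0 < xz e := by
    rintro ⟨e, he⟩
    induction e using Sym2.ind with
    | _ u v =>
      rw [hval u v (G.mem_edgeSet.mp he)]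
      exact div_pos (hY.1 _) (hm u)
  have hslack : ∀ v, 1 - ∑ e ∈ G.incE v, xz e = 1 / (1 + G.inFlow Y v) := by
    intro v
    have : ∑ e ∈ G.incE v, xz e = G.inFlow Y v / (1 + G.inFlow Y v) := by
      rw [G.sum_incE, SimpleGraph.inFlow, Finset.sum_div]
      exact Finset.sum_congr rfl fun w _ => hval _ _ ((SimpleGraph.mem_neighborFinset _ _ _).mp w.2)
    rw [this]
    have := (hm v).ne'
    field_simp
    ring
  have hlt : ∀ v, ∑ e ∈ G.incE v, xz e < 1 := by
    intro v
    have h1 := hslack v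
    have h2 : 0 < 1 / (1 + G.inFlow Y v) := one_div_pos.mpr (hm v)
    linarith
  -- stationarity: the logarithmic form of `x_e (1 - x_e) = z t_u t_v`
  have hstat : ∀ u v (h : G.Adj u v), Real.log z + Real.log (1 - ∑ e ∈ G.incE u, xz e)
      + Real.log (1 - ∑ e ∈ G.incE v, xz e)
      = Real.log (xz ⟨s(u, v), G.mem_edgeSet.mpr h⟩)
        + Real.log (1 - xz ⟨s(u, v), G.mem_edgeSet.mpr h⟩) := by
    intro u v h
    have hu := hm u
    have hv := hm v
    have hY1 := hY.1 ⟨(u, v), h⟩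
    have hY2 := hY.1 ⟨(v, u), h.symm⟩
    have e1 := hY.mul_inFlow h
    have e2 := hY.mul_inFlow h.symm
    have hx2 : 1 - xz ⟨s(u, v), G.mem_edgeSet.mpr h⟩ = z / (Y ⟨(v, u), h.symm⟩ *
        (1 + G.inFlow Y v)) := by
      rw [hxz u v h, e2, mul_comm (Y ⟨(v, u), h.symm⟩) (Y ⟨(u, v), h⟩)]
      have : 0 < z + Y ⟨(u, v), h⟩ * Y ⟨(v, u), h.symm⟩ := by positivity
      field_simp
      ring
    rw [hx2, hval u v h, hslack, hslack, Real.log_div hY2.ne' hu.ne', Real.log_div hz.ne'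
      (by positivity), Real.log_mul hY2.ne' hv.ne', Real.log_div one_ne_zero hu.ne',
      Real.log_div one_ne_zero hv.ne', Real.log_one]
    ring
  refine ⟨⟨xz, ⟨fun e => (hpos e).le, fun v => (hlt v).le⟩, rfl⟩, ?_⟩
  rintro _ ⟨x, ⟨hx0, hx1⟩, rfl⟩
  have hloc := Finset.sum_le_sum fun v (_ : v ∈ (Finset.univ : Finset V)) =>
    bethe_tangent (G.incE v) x xz (fun e _ => hx0 e) (fun e _ => hpos e) (hx1 v) (hlt v)
  rw [Finset.sum_add_distrib, G.sum_sum_incE (fun v i => (x i - xz i) *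
    (2 * Real.log (1 - ∑ j ∈ G.incE v, xz j) - Real.log (xz i) - Real.log (1 - xz i)))] at hloc
  have hlin : ∑ e : G.edgeSet, ∑ v ∈ Finset.univ.filter (fun v => v ∈ (e : Sym2 V)),
      (x e - xz e) * (2 * Real.log (1 - ∑ j ∈ G.incE v, xz j) - Real.log (xz e)
        - Real.log (1 - xz e)) = -2 * ((∑ e, x e) * Real.log z - (∑ e, xz e) * Real.log z) := by
    rw [← sub_mul, ← Finset.sum_sub_distrib, Finset.sum_mul, Finset.mul_sum]
    refine Finset.sum_congr rfl ?_
    rintro ⟨e, he⟩ _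
    induction e using Sym2.ind with
    | _ u v =>
      have h : G.Adj u v := G.mem_edgeSet.mp he
      have hf : Finset.univ.filter (fun w => w ∈ s(u, v)) = {u, v} := by
        ext w
        simp
      dsimp only
      rw [hf, Finset.sum_pair h.ne]
      have := hstat u v h
      linear_combination 2 * (x ⟨s(u, v), he⟩ - xz ⟨s(u, v), he⟩) * this
  rw [hlin] at hloc
  unfold SimpleGraph.SBethe
  linarith
end
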